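/- (Explicit formula for the fused R-matrix.) Let I ≥ 1 be an integer, 0 < q < 1, and let u ∈ ℂ \ {0} satisfy u·q^m ≠ 1 for every integer m with −I ≤ m ≤ I. Then for all integers 0 ≤ a, b, c, d ≤ I: R^I(u)_{a,b}^{c,d} = 𝟙_{a+b=c+d} · u^{d−b} q^{(d−a)I} · Σ_{p=0}^{min(b,c)} Φ_{q⁻¹}(c−p, c+d−p; u, q^I u) · Φ_{q⁻¹}(p, b; q^I/u, q^I). -/

import Mathlib

open scoped Matrix ComplexOrder

noncomputable section

/-- Entries `R(u)_{a,b}^{c,d}` of the unfused stochastic six-vertex `R`-matrix. -/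
def Rent (q u : ℂ) (a b c d : Fin 2) : ℂ :=
  if a = 0 ∧ b = 0 ∧ c = 0 ∧ d = 0 then 1
  else if a = 1 ∧ b = 1 ∧ c = 1 ∧ d = 1 then 1
  else if a = 0 ∧ b = 1 ∧ c = 0 ∧ d = 1 then q * (1 - u) / (1 - q * u)
  else if a = 0 ∧ b = 1 ∧ c = 1 ∧ d = 0 then (1 - q) / (1 - q * u)
  else if a = 1 ∧ b = 0 ∧ c = 0 ∧ d = 1 then u * (1 - q) / (1 - q * u)
  else if a = 1 ∧ b = 0 ∧ c = 1 ∧ d = 0 then (1 - u) / (1 - q * u)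
  else 0

/-- The unfused `R`-matrix as an operator (matrix) on `ℂ² ⊗ ℂ²`;
row index `(c,d)` (output), column index `(a,b)` (input), so that
`R(u)(e_a ⊗ e_b) = Σ_{c,d} R(u)_{a,b}^{c,d} e_c ⊗ e_d`. -/
def Rmat (q u : ℂ) : Matrix (Fin 2 × Fin 2) (Fin 2 × Fin 2) ℂ :=
  fun cd ab => Rent q u ab.1 ab.2 cd.1 cd.2

/-- Entries `K(u)_a^d` of the unfused boundary `K`-matrix, parameters `fa = 𝔞`, `fc = 𝔠`. -/
def Kent (fa fc u : ℂ) (a d : Fin 2) : ℂ :=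
  if a = 0 ∧ d = 0 then ((fc - fa) * u ^ 2 + u) / (fc * u ^ 2 + u - fa)
  else if a = 0 ∧ d = 1 then fa * (u ^ 2 - 1) / (fc * u ^ 2 + u - fa)
  else if a = 1 ∧ d = 0 then fc * (u ^ 2 - 1) / (fc * u ^ 2 + u - fa)
  else (fc - fa + u) / (fc * u ^ 2 + u - fa)

/-- The unfused `K`-matrix as an operator on `ℂ²`: row `d` (output), column `a` (input). -/
def Kmat (fa fc u : ℂ) : Matrix (Fin 2) (Fin 2) ℂ := fun d a => Kent fa fc u a d

/-- Entries `K̄(u)_b^c` of the unfused boundary `K̄`-matrix, parameters `fb = 𝔟`, `fd = 𝔡`. -/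
def Kbent (fb fd u : ℂ) (b c : Fin 2) : ℂ :=
  if b = 0 ∧ c = 0 then ((fb - fd) * u ^ 2 - u) / (fb * u ^ 2 - u - fd)
  else if b = 0 ∧ c = 1 then fd * (u ^ 2 - 1) / (fb * u ^ 2 - u - fd)
  else if b = 1 ∧ c = 0 then fb * (u ^ 2 - 1) / (fb * u ^ 2 - u - fd)
  else (fb - fd - u) / (fb * u ^ 2 - u - fd)

/-- The operator `P` on `ℂ² ⊗ ℂ²` swapping the two tensor factors. -/
def swapMat : Matrix (Fin 2 × Fin 2) (Fin 2 × Fin 2) ℂ :=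
  fun p r => if p.1 = r.2 ∧ p.2 = r.1 then 1 else 0

/-- `Ř(u) = P ∘ R(u)`. -/
def RcheckMat (q u : ℂ) : Matrix (Fin 2 × Fin 2) (Fin 2 × Fin 2) ℂ := swapMat * Rmat q u

/-- A two-site operator `T` placed at sites `i, j` of an `n`-fold tensor power of `ℂ²`,
acting as the identity on the other factors.  Here `(ℂ²)^{⊗n}` is identified with the
function space `(Fin n → Fin 2) → ℂ` with its standard basis. -/
def emb2 {n : ℕ} (i j : Fin n) (T : Matrix (Fin 2 × Fin 2) (Fin 2 × Fin 2) ℂ) :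
    Matrix (Fin n → Fin 2) (Fin n → Fin 2) ℂ :=
  fun x y => T (x i, x j) (y i, y j) * (if ∀ k, k ≠ i → k ≠ j → x k = y k then 1 else 0)

/-- A one-site operator `T` placed at site `i` of an `n`-fold tensor power of `ℂ²`. -/
def emb1 {n : ℕ} (i : Fin n) (T : Matrix (Fin 2) (Fin 2) ℂ) :
    Matrix (Fin n → Fin 2) (Fin n → Fin 2) ℂ :=
  fun x y => T (x i) (y i) * (if ∀ k, k ≠ i → x k = y k then 1 else 0)

/-- The permutation operator `P_ω` on `(ℂ²)^{⊗n}`: it puts the `k`-th factor in position `ω(k)`. -/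
def permMat (n : ℕ) (ω : Equiv.Perm (Fin n)) :
    Matrix (Fin n → Fin 2) (Fin n → Fin 2) ℂ :=
  fun x y => if (fun k => x (ω k)) = y then 1 else 0

/-- `inv(a)` : the number of inversions of a `{0,1}`-word. -/
def invCount {I : ℕ} (x : Fin I → Fin 2) : ℕ :=
  (Finset.univ.filter (fun p : Fin I × Fin I => p.1 < p.2 ∧ x p.2 < x p.1)).card

/-- `Z_q(I;m)`. -/
def Zq (I : ℕ) (q : ℂ) (m : ℕ) : ℂ :=
  ∑ x ∈ Finset.univ.filter (fun x : Fin I → Fin 2 => (∑ j, ((x j : ℕ))) = m),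
    q ^ invCount x

/-- The projection `Π : (ℂ²)^{⊗I} → ℂ^{I+1}`, `e_{a₁…a_I} ↦ e_{Σ a_j}`. -/
def PiMat (I : ℕ) : Matrix (Fin (I + 1)) (Fin I → Fin 2) ℂ :=
  fun m x => if (∑ j, ((x j : ℕ))) = (m : ℕ) then 1 else 0

/-- The injection `Π̂ : ℂ^{I+1} → (ℂ²)^{⊗I}`. -/
def hatPiMat (I : ℕ) (q : ℂ) : Matrix (Fin I → Fin 2) (Fin (I + 1)) ℂ :=
  fun x m => if (∑ j, ((x j : ℕ))) = (m : ℕ) then q ^ invCount x / Zq I q (m : ℕ) else 0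

/-- `F = Π̂ ∘ Π`, the projector onto the `q`-exchangeable subspace. -/
def Fmat (I : ℕ) (q : ℂ) : Matrix (Fin I → Fin 2) (Fin I → Fin 2) ℂ :=
  hatPiMat I q * PiMat I

/-- Restriction of a configuration on `2I` sites to the first `I` sites. -/
def firstHalf {I : ℕ} (x : Fin (2 * I) → Fin 2) : Fin I → Fin 2 :=
  fun k => x ⟨k.1, by have := k.isLt; omega⟩

/-- Restriction of a configuration on `2I` sites to the last `I` sites. -/
def secondHalf {I : ℕ} (x : Fin (2 * I) → Fin 2) : Fin I → Fin 2 :=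
  fun k => x ⟨k.1 + I, by have := k.isLt; omega⟩

/-- `F ⊗ F` acting on `(ℂ²)^{⊗2I}`. -/
def FFmat (I : ℕ) (q : ℂ) : Matrix (Fin (2 * I) → Fin 2) (Fin (2 * I) → Fin 2) ℂ :=
  fun x y => Fmat I q (firstHalf x) (firstHalf y) * Fmat I q (secondHalf x) (secondHalf y)

/-- `Π ⊗ Π : (ℂ²)^{⊗2I} → ℂ^{I+1} ⊗ ℂ^{I+1}`. -/
def PiPiMat (I : ℕ) : Matrix (Fin (I + 1) × Fin (I + 1)) (Fin (2 * I) → Fin 2) ℂ :=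
  fun p x => PiMat I p.1 (firstHalf x) * PiMat I p.2 (secondHalf x)

/-- `Π̂ ⊗ Π̂ : ℂ^{I+1} ⊗ ℂ^{I+1} → (ℂ²)^{⊗2I}`. -/
def hatPiPiMat (I : ℕ) (q : ℂ) : Matrix (Fin (2 * I) → Fin 2) (Fin (I + 1) × Fin (I + 1)) ℂ :=
  fun x p => hatPiMat I q (firstHalf x) p.1 * hatPiMat I q (secondHalf x) p.2

/-- The fused bulk operator `R̊^I(u)` on `(ℂ²)^{⊗2I}` : the ordered product (composition,
factors written from left to right) over `a = I, I-1, …, 1` and, inside, `b = 1, 2, …, I`,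
of the operators `R(u q^{b-a})_{b, a+I}` (sites are 1-based; here `a = I - a'`, `b = b' + 1`). -/
def Rring (I : ℕ) (q u : ℂ) : Matrix (Fin (2 * I) → Fin 2) (Fin (2 * I) → Fin 2) ℂ :=
  ((List.finRange I).map (fun a' =>
    ((List.finRange I).map (fun b' =>
      emb2 (⟨b'.1, by have := b'.isLt; omega⟩ : Fin (2 * I))
        ⟨2 * I - 1 - a'.1, by have := a'.isLt; omega⟩
        (Rmat q (u * q ^ (((b'.1 : ℤ) + 1) - ((I : ℤ) - (a'.1 : ℤ))))))).prod)).prod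

/-- The fused `R`-matrix `R^I(u) = (Π⊗Π) ∘ R̊^I(u) ∘ (Π̂⊗Π̂)` on `ℂ^{I+1} ⊗ ℂ^{I+1}`;
its entry at row `(c,d)`, column `(a,b)` is `R^I(u)_{a,b}^{c,d}`. -/
def RI (I : ℕ) (q u : ℂ) :
    Matrix (Fin (I + 1) × Fin (I + 1)) (Fin (I + 1) × Fin (I + 1)) ℂ :=
  PiPiMat I * Rring I q u * hatPiPiMat I q

/-- Real powers of a positive real number, viewed in `ℂ`. -/
def qrpow (q : ℝ) (r : ℝ) : ℂ := ((q ^ r : ℝ) : ℂ)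

/-- The fused boundary operator `K̊^I(u)` on `(ℂ²)^{⊗I}` : `P_rev` composed with the ordered
product over `a = I, …, 1` of `K(u q^{(I+1)/2-a})_a` composed with the ordered product over
`b = a-1, …, 1` of `R(u² q^{I+1-a-b})_{b,a}` (sites 1-based; `a = I - a'`, `b = a - 1 - b'`). -/
def Kring (I : ℕ) (q : ℝ) (fa fc : ℂ) (u : ℂ) :
    Matrix (Fin I → Fin 2) (Fin I → Fin 2) ℂ :=
  permMat I (Fin.revPerm) *
  ((List.finRange I).map (fun a' =>
    emb1 (⟨I - 1 - a'.1, by have := a'.isLt; omega⟩ : Fin I)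
        (Kmat fa fc (u * qrpow q (((I : ℝ) + 1) / 2 - ((I : ℝ) - (a'.1 : ℝ))))) *
    ((List.finRange (I - 1 - a'.1)).map (fun b' =>
      emb2 (⟨I - a'.1 - 2 - b'.1, by have := a'.isLt; have := b'.isLt; omega⟩ : Fin I)
        ⟨I - 1 - a'.1, by have := a'.isLt; omega⟩
        (Rmat (q : ℂ)
          (u ^ 2 * (q : ℂ) ^ (((I : ℤ) + 1) - ((I : ℤ) - (a'.1 : ℤ)) -
            ((I : ℤ) - (a'.1 : ℤ) - 1 - (b'.1 : ℤ))))))).prod)).prod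

/-- The fused `K`-matrix `K^I(u) = Π ∘ K̊^I(u) ∘ Π̂` on `ℂ^{I+1}`;
its entry at row `d`, column `a` is `K^I(u)_a^d`. -/
def KI (I : ℕ) (q : ℝ) (fa fc u : ℂ) : Matrix (Fin (I + 1)) (Fin (I + 1)) ℂ :=
  PiMat I * Kring I q fa fc u * hatPiMat I (q : ℂ)

/-- `M₀(u) = u·1 + 𝐞`, `M₁(u) = u⁻¹·1 + 𝐝` in a ℂ-algebra `A`. -/
def Mop {A : Type*} [Ring A] [Algebra ℂ A] (dd ee : A) (i : Fin 2) (u : ℂ) : A :=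
  if i = 0 then algebraMap ℂ A u + ee else algebraMap ℂ A u⁻¹ + dd

/-- The fused elements `M^I_ζ(u)`. -/
def MIop {A : Type*} [Ring A] [Algebra ℂ A] (dd ee : A) (I : ℕ) (q : ℝ) (ζ : ℕ) (u : ℂ) : A :=
  ∑ z ∈ Finset.univ.filter (fun z : Fin I → Fin 2 => (∑ j, ((z j : ℕ))) = ζ),
    ((List.finRange I).map (fun a =>
      Mop dd ee (z a) (u * qrpow q (((a.1 : ℝ) + 1) - ((I : ℝ) + 1) / 2)))).prod

end

/-- The `q`-Pochhammer symbol `(z;s)_n = (1−z)(1−sz)⋯(1−s^{n−1}z)`. -/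
noncomputable def poch (z s : ℂ) (n : ℕ) : ℂ := ∏ k ∈ Finset.range n, (1 - s ^ k * z)

/-- `Φ_s(i,j;x,y)` (used with `s = q⁻¹`). -/
noncomputable def Phi (s : ℂ) (i j : ℕ) (x y : ℂ) : ℂ :=
  (y / x) ^ i * (poch x s i * poch (y / x) s (j - i) / poch y s j) *
    (poch s s j / (poch s s i * poch s s (j - i)))

/-!
The operator `R̊^I(u)` is a stack of `I` rows, one for each site of the second tensor factor; a row
is a product of `R`-matrices along all sites of the first tensor factor. A single row maps a
`q`-exchangeable vector with `a` ones to a multiple of another such vector, the multiple being an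
explicit `2 × 2` matrix in the incoming and outgoing letters at its auxiliary site. Therefore a
stack of `J` rows preserves exchangeability in both factors, and its matrix elements are determined
by coefficients depending only on the numbers of ones. Adding a row gives a recurrence in `J` for
these coefficients. The sum over `p` in the theorem, with the second `I` replaced by `J`, satisfies
this recurrence term by term, by the contiguity relations of `q`-Pochhammer symbols, and its value
at `J = 0` is the `q`-Chu–Vandermonde identity.
-/

/-- The quotient `(z;s)_n / (s;s)_n`, extended by zero to `n < 0`; these are the coefficients of
the `q`-binomial series. -/
noncomputable def pochRatio (s z : ℂ) : ℤ → ℂ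
  | (n : ℕ) => poch z s n / poch s s n
  | .negSucc _ => 0

section qPochhammer

open Finset

variable {s : ℂ}

theorem poch_succ (z s : ℂ) (n : ℕ) : poch z s (n + 1) = poch z s n * (1 - s ^ n * z) :=
  prod_range_succ _ _

theorem poch_succ_left (z s : ℂ) (n : ℕ) : poch z s (n + 1) = (1 - z) * poch (s * z) s n := by
  simp only [poch, prod_range_succ', pow_zero, pow_succ, mul_assoc, mul_one, mul_comm]

theorem poch_ne_zero {z s : ℂ} {n : ℕ} (h : ∀ k < n, s ^ k * z ≠ 1) : poch z s n ≠ 0 :=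
  prod_ne_zero_iff.2 fun k hk => sub_ne_zero.2 (h k (mem_range.1 hk)).symm

theorem poch_self_ne_zero {n : ℕ} (hs : ∀ k, 0 < k → k ≤ n → s ^ k ≠ 1) : poch s s n ≠ 0 :=
  poch_ne_zero fun k hk => by simpa only [← pow_succ] using hs (k + 1) k.succ_pos hk

theorem pochRatio_natCast (s z : ℂ) (n : ℕ) : pochRatio s z n = poch z s n / poch s s n := rfl

theorem pochRatio_of_neg (s z : ℂ) {n : ℤ} (hn : n < 0) : pochRatio s z n = 0 := by
  cases n with
  | ofNat n => exact absurd hn (Int.natCast_nonneg n).not_gt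
  | negSucc n => rfl

theorem pochRatio_zero (s z : ℂ) : pochRatio s z 0 = 1 := by
  simpa [poch] using pochRatio_natCast s z 0

theorem pochRatio_one {n : ℕ} (hn : n ≠ 0) : pochRatio s 1 n = 0 := by
  obtain ⟨m, rfl⟩ := Nat.exists_eq_succ_of_ne_zero hn
  rw [pochRatio_natCast, poch_succ_left, sub_self, zero_mul, zero_div]

theorem pochRatio_ne_zero {z : ℂ} {n : ℕ} (hs : ∀ k, 0 < k → k ≤ n → s ^ k ≠ 1)
    (hz : ∀ k < n, s ^ k * z ≠ 1) : pochRatio s z n ≠ 0 :=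
  div_ne_zero (poch_ne_zero hz) (poch_self_ne_zero hs)

theorem pochRatio_mul_left (s z : ℂ) (n : ℤ) :
    pochRatio s (s * z) n * (1 - z) = pochRatio s z n * (1 - s ^ n * z) := by
  cases n with
  | ofNat n =>
    simp only [Int.ofNat_eq_natCast, pochRatio_natCast, zpow_natCast, div_mul_eq_mul_div]
    rw [mul_comm, ← poch_succ_left, poch_succ]
  | negSucc n => simp only [pochRatio, zero_mul]

theorem pochRatio_mul_left_sub_one (z : ℂ) {n : ℤ} (hs : 0 < n → s ^ n ≠ 1) :
    pochRatio s (s * z) (n - 1) * (1 - z) = pochRatio s z n * (1 - s ^ n) := by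
  obtain hn | rfl | hn := lt_trichotomy n 0
  · rw [pochRatio_of_neg _ _ hn, pochRatio_of_neg _ _ (by omega), zero_mul, zero_mul]
  · rw [pochRatio_of_neg _ _ (by omega), zpow_zero, sub_self, zero_mul, mul_zero]
  · have hsn : 1 - s ^ n ≠ 0 := sub_ne_zero.2 (hs hn).symm
    obtain ⟨m, rfl⟩ : ∃ m : ℕ, n = (m + 1 : ℕ) := ⟨(n - 1).toNat, by omega⟩
    rw [show ((m + 1 : ℕ) : ℤ) - 1 = m by omega, pochRatio_natCast, pochRatio_natCast,
      poch_succ_left, poch_succ, ← pow_succ, div_mul_eq_mul_div, mul_comm (1 - z)]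
    rw [zpow_natCast] at hsn ⊢
    rw [← mul_div_mul_right _ _ hsn, mul_div_right_comm]

theorem pochRatio_sub_one (z : ℂ) {n : ℤ} (hs : 0 < n → s ^ n ≠ 1) :
    pochRatio s z n * (1 - s ^ n) = pochRatio s z (n - 1) * (1 - s ^ (n - 1) * z) := by
  rw [← pochRatio_mul_left_sub_one z hs, pochRatio_mul_left]

theorem inv_pochRatio_succ (s : ℂ) {z : ℂ} (hz : z ≠ 1) (n : ℕ) :
    (pochRatio s z (n + 1 : ℕ))⁻¹ * (1 - z) = (1 - s ^ (n + 1)) * (pochRatio s (s * z) n)⁻¹ := by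
  have hz' : 1 - z ≠ 0 := sub_ne_zero.2 hz.symm
  rw [pochRatio_natCast, pochRatio_natCast, poch_succ_left z, poch_succ s, ← pow_succ, inv_div,
    inv_div]
  field_simp

/-- The `q`-Chu–Vandermonde identity, that is, the product of two `q`-binomial series. -/
theorem sum_antidiagonal_pochRatio (x y : ℂ) (n : ℕ) (hs : ∀ k, 0 < k → k ≤ n → s ^ k ≠ 1) :
    ∑ ij ∈ antidiagonal n, y ^ ij.1 * pochRatio s x ij.1 * pochRatio s y ij.2 =
      pochRatio s (x * y) n := by
  induction n with
  | zero => simp [pochRatio_zero]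
  | succ n ih =>
    have hsn : 1 - s ^ (n + 1) ≠ 0 := sub_ne_zero.2 (hs _ n.succ_pos le_rfl).symm
    have step (z : ℂ) {k : ℕ} (hk : k ≤ n) :
        pochRatio s z (k + 1 : ℕ) * (1 - s ^ (k + 1)) = pochRatio s z k * (1 - s ^ k * z) := by
      have h := pochRatio_sub_one z (n := (k + 1 : ℕ))
        fun _ => by exact_mod_cast hs (k + 1) k.succ_pos (by omega)
      rwa [show ((k + 1 : ℕ) : ℤ) - 1 = k by omega, zpow_natCast, zpow_natCast] at h
    refine mul_right_cancel₀ hsn ?_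
    rw [step _ le_rfl, ← ih fun k h0 hk => hs k h0 (by omega), sum_mul, sum_mul]
    calc ∑ ij ∈ antidiagonal (n + 1),
          y ^ ij.1 * pochRatio s x ij.1 * pochRatio s y ij.2 * (1 - s ^ (n + 1))
        = ∑ ij ∈ antidiagonal (n + 1),
            y ^ ij.1 * (pochRatio s x ij.1 * (1 - s ^ ij.1)) * pochRatio s y ij.2 * s ^ ij.2 +
          ∑ ij ∈ antidiagonal (n + 1),
            y ^ ij.1 * pochRatio s x ij.1 * (pochRatio s y ij.2 * (1 - s ^ ij.2)) := by
          rw [← sum_add_distrib]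
          refine sum_congr rfl fun ij hij => ?_
          rw [← mem_antidiagonal.1 hij, pow_add]
          ring
      _ = ∑ ij ∈ antidiagonal n, y ^ (ij.1 + 1) *
            (pochRatio s x ij.1 * (1 - s ^ ij.1 * x)) * pochRatio s y ij.2 * s ^ ij.2 +
          ∑ ij ∈ antidiagonal n,
            y ^ ij.1 * pochRatio s x ij.1 * (pochRatio s y ij.2 * (1 - s ^ ij.2 * y)) := by
          rw [Finset.Nat.sum_antidiagonal_succ, Finset.Nat.sum_antidiagonal_succ' (n := n)]
          simp only [pow_zero, sub_self, mul_zero, zero_mul, zero_add]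
          congr 1
          · exact sum_congr rfl fun ij hij => by
              rw [step x (Nat.le.intro (mem_antidiagonal.1 hij))]
          · exact sum_congr rfl fun ij hij => by
              rw [step y (Nat.le.intro ((add_comm _ _).trans (mem_antidiagonal.1 hij)))]
      _ = _ := by
          rw [← sum_add_distrib]
          refine sum_congr rfl fun ij hij => ?_
          rw [← mem_antidiagonal.1 hij, pow_add]
          ring

theorem sum_pochRatio_inv_mul_pochRatio {w : ℂ} (hw : w ≠ 0) {b c : ℕ} (hbc : b ≤ c)
    (hs : ∀ k, 0 < k → k ≤ b → s ^ k ≠ 1) :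
    ∑ p ∈ range (c + 1), w ^ p * pochRatio s w⁻¹ p * pochRatio s w (b - p) =
      if b = 0 then 1 else 0 := by
  have hvanish (p : ℕ) (_ : p ∈ range (c + 1)) (hpb : p ∉ range (b + 1)) :
      w ^ p * pochRatio s w⁻¹ p * pochRatio s w (b - p) = 0 := by
    rw [mem_range] at hpb
    rw [pochRatio_of_neg s w (by omega), mul_zero]
  calc _ = ∑ p ∈ range (b + 1), w ^ p * pochRatio s w⁻¹ p * pochRatio s w (b - p : ℕ) := by
        rw [← sum_subset (range_mono (by omega)) hvanish]
        refine sum_congr rfl fun p hp => ?_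
        rw [Nat.cast_sub (mem_range_succ_iff.1 hp)]
    _ = pochRatio s 1 b := by
        rw [← inv_mul_cancel₀ hw, ← sum_antidiagonal_pochRatio _ _ _ hs,
          Finset.Nat.sum_antidiagonal_eq_sum_range_succ
            fun i j => w ^ i * pochRatio s w⁻¹ i * pochRatio s w j]
    _ = _ := by
        split_ifs with hb
        · rw [hb, Nat.cast_zero, pochRatio_zero]
        · exact pochRatio_one hb

theorem Phi_eq_pochRatio (s : ℂ) (i j : ℕ) (x y : ℂ) :
    Phi s i j x y =
      (y / x) ^ i * pochRatio s x i * pochRatio s (y / x) (j - i : ℕ) / pochRatio s y j := by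
  simp only [Phi, pochRatio_natCast, div_eq_mul_inv, mul_inv, inv_inv]
  ring

end qPochhammer

section Words

variable {k : ℕ} {q : ℂ}

/-- The number of ones in a `{0,1}`-word. -/
def onesCount (x : Fin k → Fin 2) : ℕ := ∑ j, (x j : ℕ)

/-- The weight `∏_{i : x_i = 1} (-q^{k-i})` of a word `x₀ … x_{k-1}`.  On words with a fixed number
of ones it is proportional to `q^{inv x}` (see `wordWeight_eq_invCount`), but it is multiplicative
in the letters. -/
noncomputable def wordWeight (q : ℂ) (x : Fin k → Fin 2) : ℂ :=
  ∏ i : Fin k, (-q ^ (k - (i : ℕ))) ^ (x i : ℕ)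

/-- The `q`-exchangeable vector supported on the words with `a` ones.  The number `a` is an integer
so that the recursions below need no side conditions: the vector vanishes unless `0 ≤ a ≤ k`. -/
noncomputable def exchVec (q : ℂ) (a : ℤ) (x : Fin k → Fin 2) : ℂ :=
  if (onesCount x : ℤ) = a then wordWeight q x else 0

/-- The sum of the entries of `exchVec q a`, a multiple of `Z_q(k; a)`. -/
noncomputable def exchNorm (q : ℂ) (k : ℕ) (a : ℤ) : ℂ := ∑ x : Fin k → Fin 2, exchVec q a x

theorem onesCount_tail (x : Fin (k + 1) → Fin 2) :
    onesCount x = (x 0 : ℕ) + onesCount (Fin.tail x) :=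
  Fin.sum_univ_succ _

theorem onesCount_init (x : Fin (k + 1) → Fin 2) :
    onesCount x = onesCount (Fin.init x) + (x (Fin.last k) : ℕ) :=
  Fin.sum_univ_castSucc _

theorem onesCount_le (x : Fin k → Fin 2) : onesCount x ≤ k :=
  (Finset.sum_le_card_nsmul _ _ 1 fun j _ => by omega).trans_eq (by simp)

theorem wordWeight_tail (q : ℂ) (x : Fin (k + 1) → Fin 2) :
    wordWeight q x = (-q ^ (k + 1)) ^ (x 0 : ℕ) * wordWeight q (Fin.tail x) := by
  simp only [wordWeight, Fin.prod_univ_succ, Fin.tail, Fin.val_zero, Fin.val_succ, Nat.sub_zero,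
    Nat.add_sub_add_right]

theorem wordWeight_init (q : ℂ) (x : Fin (k + 1) → Fin 2) :
    wordWeight q x =
      (-1) ^ (x (Fin.last k) : ℕ) * q ^ onesCount x * wordWeight q (Fin.init x) := by
  have hshift (i : Fin k) : (-q ^ (k + 1 - (i : ℕ))) ^ (x i.castSucc : ℕ) =
      q ^ (x i.castSucc : ℕ) * (-q ^ (k - (i : ℕ))) ^ (x i.castSucc : ℕ) := by
    rw [← mul_pow, Nat.sub_add_comm i.isLt.le, pow_succ', mul_neg]
  rw [onesCount_init]
  simp only [wordWeight, Fin.prod_univ_castSucc, Fin.val_castSucc, Fin.val_last,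
    hshift, Finset.prod_mul_distrib, Finset.prod_pow_eq_pow_sum, Fin.init, onesCount,
    Nat.add_sub_cancel_left, pow_one, neg_pow q]
  ring

theorem invCount_init (x : Fin (k + 1) → Fin 2) :
    invCount x =
      invCount (Fin.init x) + if x (Fin.last k) = 0 then onesCount (Fin.init x) else 0 := by
  change _ = invCount (fun i : Fin k => x i.castSucc) + _
  have hlast (i : Fin k) : ¬ Fin.last k < i.castSucc := (Fin.le_last _).not_gt
  simp only [invCount, onesCount, Fin.init, Finset.card_filter, Fintype.sum_prod_type,
    Fin.sum_univ_castSucc, Finset.sum_add_distrib, hlast, false_and, if_false,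
    Finset.sum_const_zero, lt_irrefl, add_zero, Fin.castSucc_lt_castSucc_iff,
    Fin.castSucc_lt_last, true_and]
  congr 1
  split_ifs with h
  · exact Finset.sum_congr rfl fun i _ => by
      rw [h]
      split_ifs <;> omega
  · exact Finset.sum_eq_zero fun i _ => if_neg (by omega)

theorem wordWeight_eq_invCount (q : ℂ) (x : Fin k → Fin 2) :
    wordWeight q x =
      (-1) ^ onesCount x * q ^ (onesCount x + 1).choose 2 * q ^ invCount x := by
  induction k with
  | zero => simp [wordWeight, onesCount, invCount]
  | succ k ih =>
    rw [wordWeight_init, ih, invCount_init, onesCount_init]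
    obtain h | h := Fin.exists_fin_two.1 ⟨x (Fin.last k), rfl⟩
    · simp only [h, Fin.val_zero, if_true, add_zero, pow_add]
      ring
    · simp only [h, Fin.val_one, one_ne_zero, if_false, add_zero, Nat.choose_succ_succ' _ 1,
        Nat.choose_one_right, pow_add]
      ring

theorem exchVec_tail (q : ℂ) (a : ℤ) (x : Fin (k + 1) → Fin 2) :
    exchVec q a x = (-q ^ (k + 1)) ^ (x 0 : ℕ) * exchVec q (a - (x 0 : ℕ)) (Fin.tail x) := by
  simp only [exchVec, onesCount_tail, wordWeight_tail, mul_ite, mul_zero]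
  congr 1
  exact propext (by omega)

theorem exchVec_init (q : ℂ) (a : ℤ) (x : Fin (k + 1) → Fin 2) :
    exchVec q a x =
      (-1) ^ (x (Fin.last k) : ℕ) * q ^ a * exchVec q (a - (x (Fin.last k) : ℕ)) (Fin.init x) := by
  by_cases h : (onesCount x : ℤ) = a
  · have h' : (onesCount (Fin.init x) : ℤ) = a - (x (Fin.last k) : ℕ) := by
      rw [← h, onesCount_init]
      omega
    rw [exchVec, exchVec, if_pos h, if_pos h', wordWeight_init, ← h, zpow_natCast]
  · have h' : (onesCount (Fin.init x) : ℤ) ≠ a - (x (Fin.last k) : ℕ) := by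
      rw [onesCount_init] at h
      omega
    rw [exchVec, exchVec, if_neg h, if_neg h', mul_zero]

theorem exchVec_fin_zero (q : ℂ) (a : ℤ) (x : Fin 0 → Fin 2) :
    exchVec q a x = if a = 0 then 1 else 0 := by
  simp [exchVec, onesCount, wordWeight, eq_comm]

theorem exchNorm_zero (q : ℂ) (a : ℤ) : exchNorm q 0 a = if a = 0 then 1 else 0 := by
  simp only [exchNorm, exchVec_fin_zero, Fintype.sum_unique]

theorem exchNorm_succ (q : ℂ) (k : ℕ) (a : ℤ) :
    exchNorm q (k + 1) a = exchNorm q k a - q ^ (k + 1) * exchNorm q k (a - 1) := by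
  have hcons (p : Fin 2 × (Fin k → Fin 2)) :
      Fin.consEquiv (fun _ => Fin 2) p = Fin.cons (α := fun _ => Fin 2) p.1 p.2 := rfl
  simp only [exchNorm, exchVec_tail, ← (Fin.consEquiv fun _ => Fin 2).sum_comp,
    Fintype.sum_prod_type, Fin.sum_univ_two, hcons, Fin.cons_zero, Fin.tail_cons,
    ← Finset.mul_sum, Fin.val_zero, Fin.val_one, pow_zero, pow_one, one_mul, Nat.cast_zero,
    Nat.cast_one, sub_zero]
  ring

theorem exchNorm_succ' (q : ℂ) (k : ℕ) (a : ℤ) :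
    exchNorm q (k + 1) a = q ^ a * (exchNorm q k a - exchNorm q k (a - 1)) := by
  have hsnoc (p : Fin 2 × (Fin k → Fin 2)) :
      Fin.snocEquiv (fun _ => Fin 2) p = Fin.snoc (α := fun _ => Fin 2) p.2 p.1 := rfl
  simp only [exchNorm, exchVec_init, ← (Fin.snocEquiv fun _ => Fin 2).sum_comp,
    Fintype.sum_prod_type, Fin.sum_univ_two, hsnoc, Fin.snoc_last, Fin.init_snoc,
    ← Finset.mul_sum, Fin.val_zero, Fin.val_one, pow_zero, pow_one, one_mul, Nat.cast_zero,
    Nat.cast_one, sub_zero]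
  ring

theorem exchNorm_mul_one_sub (hq : q ≠ 0) (k : ℕ) (a : ℤ) :
    exchNorm q k a * (1 - q⁻¹ ^ a) = exchNorm q k (a - 1) * (1 - q⁻¹ ^ (a - 1) * q ^ k) := by
  have hqa : q ^ a ≠ 0 := zpow_ne_zero _ hq
  have h := (exchNorm_succ q k a).symm.trans (exchNorm_succ' q k a)
  rw [inv_zpow, inv_zpow, zpow_sub_one₀ hq]
  field_simp
  linear_combination -h

theorem exchNorm_of_neg (q : ℂ) (k : ℕ) {a : ℤ} (ha : a < 0) : exchNorm q k a = 0 :=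
  Finset.sum_eq_zero fun x _ => if_neg (by omega)

theorem exchNorm_zero_right (q : ℂ) (k : ℕ) : exchNorm q k 0 = 1 := by
  induction k with
  | zero => rw [exchNorm_zero, if_pos rfl]
  | succ k ih => rw [exchNorm_succ, ih, exchNorm_of_neg _ _ (by omega), mul_zero, sub_zero]

theorem exchNorm_eq_pochRatio (hq : q ≠ 0) (k m : ℕ) (hqm : ∀ n, 0 < n → n ≤ m → q⁻¹ ^ n ≠ 1) :
    exchNorm q k m = pochRatio q⁻¹ (q ^ k) m := by
  induction m with
  | zero => rw [Nat.cast_zero, exchNorm_zero_right, pochRatio_zero]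
  | succ m ih =>
    have hsm : q⁻¹ ^ ((m + 1 : ℕ) : ℤ) ≠ 1 := by
      rw [zpow_natCast]
      exact hqm _ m.succ_pos le_rfl
    refine mul_right_cancel₀ (sub_ne_zero.2 hsm.symm) ?_
    rw [exchNorm_mul_one_sub hq, pochRatio_sub_one _ fun _ => hsm, Nat.cast_succ,
      add_sub_cancel_right, ih fun n h0 hn => hqm n h0 (by omega)]

theorem exchNorm_ne_zero (hq : q ≠ 0) {k m : ℕ} (hmk : m ≤ k)
    (hqk : ∀ n, 0 < n → n ≤ k → q⁻¹ ^ n ≠ 1) : exchNorm q k m ≠ 0 := by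
  have hqm n (h0 : 0 < n) (hn : n ≤ m) : q⁻¹ ^ n ≠ 1 := hqk n h0 (hn.trans hmk)
  rw [exchNorm_eq_pochRatio hq k m hqm]
  refine pochRatio_ne_zero hqm fun n hn h => hqk (k - n) (by omega) (by omega) ?_
  rw [← Nat.sub_add_cancel (hn.le.trans hmk), pow_add, mul_left_comm, ← mul_pow,
    inv_mul_cancel₀ hq, one_pow, mul_one] at h
  rw [inv_pow, h, inv_one]

theorem hatPiMat_eq_exchVec_div (hq : q ≠ 0) (x : Fin k → Fin 2) (m : Fin (k + 1)) :
    hatPiMat k q x m = exchVec q (m : ℕ) x / exchNorm q k (m : ℕ) := by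
  set C : ℂ := (-1) ^ (m : ℕ) * q ^ ((m : ℕ) + 1).choose 2 with hC
  have hC0 : C ≠ 0 := by simp [hC, hq]
  have hvec (y : Fin k → Fin 2) :
      exchVec q (m : ℕ) y = C * if onesCount y = m then q ^ invCount y else 0 := by
    simp only [exchVec, Nat.cast_inj, mul_ite, mul_zero]
    split_ifs with h
    · rw [wordWeight_eq_invCount, h]
    · rfl
  have hnorm : exchNorm q k (m : ℕ) = C * Zq k q m := by
    simp only [exchNorm, hvec, ← Finset.mul_sum, Zq, Finset.sum_filter]
    rfl
  rw [hvec, hnorm, mul_div_mul_left _ _ hC0, hatPiMat, ite_div, zero_div]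
  rfl

theorem sum_PiMat_mul_wordWeight (q : ℂ) (m : Fin (k + 1)) :
    ∑ x, PiMat k m x * wordWeight q x = exchNorm q k (m : ℕ) := by
  simp only [PiMat, exchNorm, exchVec, onesCount, ite_mul, one_mul, zero_mul, Nat.cast_inj]

end Words

section Locality

variable {n : ℕ}

/-- The operator `M` on `(ℂ²)^{⊗n}` does not change the letters at sites outside `S`. -/
def PreservesOutside (S : Set (Fin n)) (M : Matrix (Fin n → Fin 2) (Fin n → Fin 2) ℂ) : Prop :=
  ∀ ⦃x y⦄, M x y ≠ 0 → Set.EqOn x y Sᶜ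

namespace PreservesOutside

variable {S T : Set (Fin n)} {M N : Matrix (Fin n → Fin 2) (Fin n → Fin 2) ℂ}

theorem mono (hST : S ⊆ T) (hM : PreservesOutside S M) : PreservesOutside T M :=
  fun _ _ h => (hM h).mono (Set.compl_subset_compl.2 hST)

theorem one : PreservesOutside S (1 : Matrix (Fin n → Fin 2) (Fin n → Fin 2) ℂ) := by
  intro x y h
  rw [not_imp_comm.1 Matrix.one_apply_ne h]
  exact Set.eqOn_refl _ _

theorem mul (hM : PreservesOutside S M) (hN : PreservesOutside S N) :
    PreservesOutside S (M * N) := by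
  intro x y h
  obtain ⟨z, -, hz⟩ := Finset.exists_ne_zero_of_sum_ne_zero h
  exact (hM (left_ne_zero_of_mul hz)).trans (hN (right_ne_zero_of_mul hz))

theorem list_prod {l : List (Matrix (Fin n → Fin 2) (Fin n → Fin 2) ℂ)}
    (h : ∀ M ∈ l, PreservesOutside S M) : PreservesOutside S l.prod :=
  List.prod_induction _ (fun _ _ => mul) one h

theorem mulVec_congr {φ ψ : (Fin n → Fin 2) → ℂ} {x : Fin n → Fin 2}
    (hM : PreservesOutside S M) (h : ∀ y, Set.EqOn x y Sᶜ → φ y = ψ y) :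
    (M *ᵥ φ) x = (M *ᵥ ψ) x := by
  refine Finset.sum_congr rfl fun y _ => ?_
  change M x y * φ y = M x y * ψ y
  by_cases hxy : M x y = 0
  · rw [hxy, zero_mul, zero_mul]
  · rw [h y (hM hxy)]

end PreservesOutside

theorem preservesOutside_emb2 (i j : Fin n) (T : Matrix (Fin 2 × Fin 2) (Fin 2 × Fin 2) ℂ) :
    PreservesOutside {i, j} (emb2 i j T) := by
  intro x y h l hl
  have hxy := not_imp_comm.1 (if_neg (t := (1 : ℂ))) (right_ne_zero_of_mul h)
  simp only [Set.mem_compl_iff, Set.mem_insert_iff, Set.mem_singleton_iff, not_or] at hl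
  exact hxy l hl.1 hl.2

theorem emb2_mulVec {i j : Fin n} (hij : i ≠ j) (T : Matrix (Fin 2 × Fin 2) (Fin 2 × Fin 2) ℂ)
    (ψ : (Fin n → Fin 2) → ℂ) (x : Fin n → Fin 2) :
    (emb2 i j T *ᵥ ψ) x =
      ∑ α, ∑ β, T (x i, x j) (α, β) * ψ (Function.update (Function.update x i α) j β) := by
  rw [← Fintype.sum_prod_type'
    (f := fun α β => T (x i, x j) (α, β) * ψ (Function.update (Function.update x i α) j β))]
  symm
  refine Finset.sum_of_injOn
    (fun p : Fin 2 × Fin 2 => Function.update (Function.update x i p.1) j p.2)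
    (fun p _ p' _ h => ?_) (by simp) (fun y _ hy => ?_) fun p _ => ?_
  · have hi := congrFun h i
    have hj := congrFun h j
    simp only [Function.update_self, Function.update_of_ne hij] at hi hj
    exact Prod.ext hi hj
  · by_contra hne
    have hxy := preservesOutside_emb2 i j T (left_ne_zero_of_mul hne)
    refine hy ⟨(y i, y j), by simp, ?_⟩
    funext l
    by_cases hlj : l = j
    · simp [hlj]
    by_cases hli : l = i
    · simp [hli, hij]
    simp [hlj, hli, hxy (x := l) (by simp [hlj, hli])]
  · have hoff l (hli : l ≠ i) (hlj : l ≠ j) :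
        x l = Function.update (Function.update x i p.1) j p.2 l := by
      rw [Function.update_of_ne hlj, Function.update_of_ne hli]
    simp only [emb2, if_pos hoff, mul_one, Function.update_self, Function.update_of_ne hij]

end Locality

section Row

variable {n k : ℕ} {q u : ℂ}

/-- The ordered product of the operators `R(u q^b)` at the sites `s b` and `j`, where
`b = 0, …, k - 1`. -/
noncomputable def rowMat (q u : ℂ) (s : Fin k → Fin n) (j : Fin n) :
    Matrix (Fin n → Fin 2) (Fin n → Fin 2) ℂ :=
  ((List.finRange k).map fun b => emb2 (s b) j (Rmat q (u * q ^ (b : ℕ)))).prod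

/-- The transition weights of a row acting on the exchangeable vector with `a` ones: row index the
letter at the auxiliary site before, column index the letter after. -/
noncomputable def rowWeight (q u : ℂ) (k : ℕ) (a : ℤ) : Matrix (Fin 2) (Fin 2) ℂ :=
  (1 - q ^ k * u)⁻¹ •
    !![1 - q ^ (k - a) * u, -u * q ^ k * (1 - q ^ (k - a + 1));
       1 - q⁻¹ ^ (a + 1), q ^ (k - a) - q ^ k * u]

theorem rowMat_succ (q u : ℂ) (s : Fin (k + 1) → Fin n) (j : Fin n) :
    rowMat q u s j =
      rowMat q u (s ∘ Fin.castSucc) j * emb2 (s (Fin.last k)) j (Rmat q (u * q ^ k)) := by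
  simp only [rowMat, List.finRange_succ_last, List.map_append, List.map_map, List.prod_append,
    List.map_cons, List.map_nil, List.prod_singleton, Fin.val_last]
  rfl

theorem preservesOutside_rowMat (q u : ℂ) (s : Fin k → Fin n) (j : Fin n) :
    PreservesOutside (insert j (Set.range s)) (rowMat q u s j) := by
  refine PreservesOutside.list_prod fun M hM => ?_
  obtain ⟨b, -, rfl⟩ := List.mem_map.1 hM
  refine (preservesOutside_emb2 _ _ _).mono ?_
  rw [Set.pair_comm]
  exact Set.insert_subset_insert (Set.singleton_subset_iff.2 ⟨b, rfl⟩)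

theorem Rmat_apply_eq_zero (q u : ℂ) {α β γ δ : Fin 2} (h : (α : ℕ) + β ≠ γ + δ) :
    Rmat q u (γ, δ) (α, β) = 0 := by
  revert h
  fin_cases α <;> fin_cases β <;> fin_cases γ <;> fin_cases δ <;> simp [Rmat, Rent]

theorem rowWeight_succ (hq : q ≠ 0) (hk : 1 - q ^ k * u ≠ 0) (hk' : 1 - q ^ (k + 1) * u ≠ 0)
    (a : ℤ) (x β γ : Fin 2) :
    ∑ α : Fin 2, ∑ δ : Fin 2,
        Rmat q (u * q ^ k) (x, δ) (α, β) * ((-1) ^ (α : ℕ) * q ^ a) *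
          rowWeight q u k (a - (α : ℕ)) δ γ =
      rowWeight q u (k + 1) a β γ * ((-1) ^ (x : ℕ) * q ^ (a + (β : ℕ) - (γ : ℕ))) := by
  have hqk : q ^ k ≠ 0 := pow_ne_zero _ hq
  obtain ⟨v, rfl⟩ : ∃ v, u = v / q ^ k := ⟨q ^ k * u, (mul_div_cancel_left₀ _ hqk).symm⟩
  rw [pow_succ', mul_assoc, mul_div_cancel₀ _ hqk] at hk'
  rw [mul_div_cancel₀ _ hqk] at hk
  have hk'' : 1 - v * q ≠ 0 := by rwa [mul_comm]
  fin_cases x <;> fin_cases β <;> fin_cases γ <;>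
    simp only [Rmat, Rent, Fin.zero_eta, true_and, zero_ne_one, false_and, and_self, and_false,
      ↓reduceIte, div_mul_cancel₀ _ hqk, ite_mul, one_mul, zero_mul, rowWeight,
      mul_div_cancel₀ _ hqk, zpow_sub₀ hq, zpow_natCast, neg_mul, zpow_add₀ hq, pow_succ', pow_zero,
      mul_one, inv_zpow', neg_add_rev, Int.reduceNeg, neg_sub, zpow_neg, Matrix.smul_apply,
      Matrix.of_apply, Matrix.cons_val', Matrix.cons_val_zero, Matrix.cons_val_fin_one, smul_eq_mul,
      mul_assoc, Fin.sum_univ_two, and_true, one_ne_zero, Matrix.cons_val_one, Fin.coe_ofNat_eq_mod,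
      Nat.zero_mod, add_zero, Nat.mod_succ, mul_neg, zero_add, Nat.cast_add, Nat.cast_one,
      CharP.cast_eq_zero, sub_zero, Fin.mk_one, Finset.sum_ite_eq', Finset.mem_univ,
      add_sub_cancel_right, neg_inj, neg_neg] <;>
    field_simp <;> ring

theorem rowWeight_zero_mul_exchVec (q : ℂ) (hu : 1 - u ≠ 0) (a : ℤ) (β γ : Fin 2)
    (x : Fin 0 → Fin 2) :
    rowWeight q u 0 a β γ * exchVec q (a + (β : ℕ) - (γ : ℕ)) x =
      if β = γ then exchVec q a x else 0 := by
  rw [exchVec_fin_zero, exchVec_fin_zero, mul_ite, mul_one, mul_zero]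
  by_cases ha : a + (β : ℕ) - (γ : ℕ) = 0
  · obtain rfl : a = (γ : ℕ) - (β : ℕ) := by omega
    rw [if_pos ha]
    fin_cases β <;> fin_cases γ <;> simp [rowWeight, hu]
  · rw [if_neg ha]
    split_ifs with hβ ha' <;> [(subst hβ; omega); rfl; rfl]

theorem mulVec_sum_mul {R l m ι : Type*} [CommSemiring R] [Fintype m] [Fintype ι]
    (M : Matrix l m R) (r : ι → R) (g : ι → m → R) (x : l) :
    (M *ᵥ fun y => ∑ i, r i * g i y) x = ∑ i, r i * (M *ᵥ g i) x := by
  simp only [Matrix.mulVec, dotProduct, Finset.mul_sum, mul_left_comm]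
  exact Finset.sum_comm

theorem emb2_last_mulVec {s : Fin (k + 1) → Fin n} (hs : Function.Injective s) {j : Fin n}
    (hj : j ∉ Set.range s) (T : Matrix (Fin 2 × Fin 2) (Fin 2 × Fin 2) ℂ) (a : ℤ) (f : Fin 2 → ℂ)
    (x : Fin n → Fin 2) :
    (emb2 (s (Fin.last k)) j T *ᵥ fun y => f (y j) * exchVec q a (y ∘ s)) x =
      ∑ α : Fin 2, (-1) ^ (α : ℕ) * q ^ a *
        ((∑ β, T (x (s (Fin.last k)), x j) (α, β) * f β) *
          exchVec q (a - (α : ℕ)) (x ∘ s ∘ Fin.castSucc)) := by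
  have hlj : s (Fin.last k) ≠ j := fun h => hj ⟨_, h⟩
  rw [emb2_mulVec hlj]
  refine Finset.sum_congr rfl fun α _ => ?_
  rw [Finset.sum_mul, Finset.mul_sum]
  refine Finset.sum_congr rfl fun β _ => ?_
  have hinit : Fin.init (Function.update (Function.update x (s (Fin.last k)) α) j β ∘ s) =
      x ∘ s ∘ Fin.castSucc := by
    funext i
    have hi : s i.castSucc ≠ s (Fin.last k) := hs.ne (Fin.castSucc_lt_last i).ne
    simp only [Fin.init, Function.comp_apply, Function.update_of_ne hi,
      Function.update_of_ne fun h => hj ⟨_, h⟩]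
  rw [exchVec_init, hinit, Function.comp_apply, Function.update_of_ne hlj, Function.update_self,
    Function.update_self]
  ring

/-- Since `R` conserves the number of ones, all terms on the left are multiples of the same
exchangeable vectors as on the right, and the identity reduces to `rowWeight_succ`. -/
theorem rowWeight_succ_mul_exchVec (hq : q ≠ 0) (hk : 1 - q ^ k * u ≠ 0)
    (hk' : 1 - q ^ (k + 1) * u ≠ 0) (a : ℤ) (f : Fin 2 → ℂ) (X J : Fin 2) (y : Fin k → Fin 2) :
    ∑ α : Fin 2, (-1) ^ (α : ℕ) * q ^ a *
        ∑ γ : Fin 2, (∑ β, Rmat q (u * q ^ k) (X, γ) (α, β) * f β) *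
          (rowWeight q u k (a - (α : ℕ)) γ J *
            exchVec q (a - (α : ℕ) + (γ : ℕ) - (J : ℕ)) y) =
      ∑ β, f β * (rowWeight q u (k + 1) a β J * ((-1) ^ (X : ℕ) * q ^ (a + (β : ℕ) - (J : ℕ)) *
        exchVec q (a + (β : ℕ) - (J : ℕ) - (X : ℕ)) y)) := by
  set T := Rmat q (u * q ^ k)
  have hcons (α β γ : Fin 2) :
      T (X, γ) (α, β) * exchVec q (a - (α : ℕ) + (γ : ℕ) - (J : ℕ)) y =
        T (X, γ) (α, β) * exchVec q (a + (β : ℕ) - (J : ℕ) - (X : ℕ)) y := by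
    by_cases h : (α : ℕ) + β = X + γ
    · congr 2
      omega
    · rw [show T (X, γ) (α, β) = 0 from Rmat_apply_eq_zero _ _ h, zero_mul, zero_mul]
  calc _ = ∑ α : Fin 2, ∑ γ : Fin 2, ∑ β, f β * ((-1) ^ (α : ℕ) * q ^ a) *
          rowWeight q u k (a - (α : ℕ)) γ J *
            (T (X, γ) (α, β) * exchVec q (a - (α : ℕ) + (γ : ℕ) - (J : ℕ)) y) := by
        simp only [Finset.sum_mul, Finset.mul_sum]
        refine Finset.sum_congr rfl fun α _ => Finset.sum_congr rfl fun γ _ =>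
          Finset.sum_congr rfl fun β _ => ?_
        ring
    _ = ∑ β, f β * ((∑ α : Fin 2, ∑ γ : Fin 2, T (X, γ) (α, β) * ((-1) ^ (α : ℕ) * q ^ a) *
          rowWeight q u k (a - (α : ℕ)) γ J) *
            exchVec q (a + (β : ℕ) - (J : ℕ) - (X : ℕ)) y) := by
        simp only [hcons, Fin.sum_univ_two]
        ring
    _ = _ := by simp only [T, rowWeight_succ hq hk hk', mul_assoc (rowWeight q u (k + 1) _ _ _)]

theorem rowMat_mulVec (hq : q ≠ 0) {s : Fin k → Fin n} (hs : Function.Injective s) {j : Fin n}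
    (hj : j ∉ Set.range s) (hu : ∀ i ≤ k, 1 - q ^ i * u ≠ 0) (a : ℤ) (f : Fin 2 → ℂ)
    (x : Fin n → Fin 2) :
    (rowMat q u s j *ᵥ fun y => f (y j) * exchVec q a (y ∘ s)) x =
      ∑ β, f β * (rowWeight q u k a β (x j) * exchVec q (a + (β : ℕ) - (x j : ℕ)) (x ∘ s)) := by
  induction k generalizing a f x with
  | zero =>
    simp only [rowWeight_zero_mul_exchVec q (by simpa using hu 0 le_rfl), mul_ite, mul_zero,
      Finset.sum_ite_eq', Finset.mem_univ, if_true]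
    simp [rowMat, exchVec_fin_zero]
  | succ k ih =>
    set X := x (s (Fin.last k)) with hX
    set J := x j
    have hs' : Function.Injective (s ∘ Fin.castSucc) := hs.comp (Fin.castSucc_injective k)
    have hj' : j ∉ Set.range (s ∘ Fin.castSucc) := fun ⟨i, hi⟩ => hj ⟨_, hi⟩
    have hlast : s (Fin.last k) ∈ (insert j (Set.range (s ∘ Fin.castSucc)))ᶜ := by
      rintro (h | ⟨i, hi⟩)
      exacts [hj ⟨_, h⟩, (Fin.castSucc_lt_last i).ne (hs hi)]
    calc (rowMat q u s j *ᵥ fun y => f (y j) * exchVec q a (y ∘ s)) x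
        = (rowMat q u (s ∘ Fin.castSucc) j *ᵥ fun y => ∑ α : Fin 2,
            (-1) ^ (α : ℕ) * q ^ a * ((∑ β, Rmat q (u * q ^ k) (X, y j) (α, β) * f β) *
              exchVec q (a - (α : ℕ)) (y ∘ s ∘ Fin.castSucc))) x := by
          rw [rowMat_succ, ← Matrix.mulVec_mulVec]
          refine (preservesOutside_rowMat _ _ _ _).mulVec_congr fun y hy => ?_
          rw [emb2_last_mulVec hs hj, hX, hy hlast]
      _ = ∑ α : Fin 2, (-1) ^ (α : ℕ) * q ^ a *
            ∑ γ : Fin 2, (∑ β, Rmat q (u * q ^ k) (X, γ) (α, β) * f β) *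
              (rowWeight q u k (a - (α : ℕ)) γ J *
                exchVec q (a - (α : ℕ) + (γ : ℕ) - (J : ℕ)) (x ∘ s ∘ Fin.castSucc)) := by
          rw [mulVec_sum_mul]
          exact Finset.sum_congr rfl fun α _ => congrArg _ <|
            ih hs' hj' (fun i hi => hu i (by omega)) _
              (fun γ => ∑ β, Rmat q (u * q ^ k) (X, γ) (α, β) * f β) x
      _ = ∑ β, f β * (rowWeight q u (k + 1) a β J *
            exchVec q (a + (β : ℕ) - (J : ℕ)) (x ∘ s)) := by
          simp only [exchVec_init q _ (x ∘ s)]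
          exact rowWeight_succ_mul_exchVec hq (hu k (by omega)) (hu (k + 1) le_rfl) a f X J _

end Row

section InvPow

variable {G : Type*} [CommGroupWithZero G] {q : G} {I : ℕ}

theorem inv_pow_ne_one (hqI : ∀ n : ℕ, 0 < n → n ≤ I → q ^ n ≠ 1) {n : ℕ} (h0 : 0 < n)
    (hn : n ≤ I) : q⁻¹ ^ n ≠ 1 := by
  rw [inv_pow, Ne, inv_eq_one]
  exact hqI n h0 hn

theorem inv_zpow_ne_one (hqI : ∀ n : ℕ, 0 < n → n ≤ I → q ^ n ≠ 1) {n : ℤ} (hn : n ≤ I)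
    (h0 : 0 < n) : q⁻¹ ^ n ≠ 1 := by
  lift n to ℕ using h0.le
  rw [zpow_natCast]
  exact inv_pow_ne_one hqI (by omega) (by omega)

theorem inv_pow_mul_pow (hq : q ≠ 0) {m n : ℕ} (h : m ≤ n) : q⁻¹ ^ m * q ^ n = q ^ (n - m) := by
  rw [inv_pow, inv_mul_eq_div, pow_sub₀ _ hq h, div_eq_mul_inv]

theorem inv_mul_pow_succ_mul (hq : q ≠ 0) (w : G) (n : ℕ) :
    q⁻¹ * (q ^ (n + 1) * w) = q ^ n * w := by
  rw [pow_succ', mul_assoc, inv_mul_cancel_left₀ hq]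

end InvPow

section FusedCoeff

variable {q w : ℂ} {I J : ℕ}

theorem rowWeight_mul_exchNorm (hq : q ≠ 0) (u : ℂ) (k : ℕ) (a : ℤ) (β γ : Fin 2) :
    rowWeight q u k a β γ * exchNorm q k (a + (β : ℕ) - (γ : ℕ)) =
      ((1 - q ^ k * u)⁻¹ •
        !![1 - q ^ (k - a) * u, u * (q ^ (k - a) - q ^ k);
           1 - q ^ (k - a), q ^ (k - a) - q ^ k * u] : Matrix (Fin 2) (Fin 2) ℂ) β γ *
        exchNorm q k a := by
  have hinv (n : ℤ) : q⁻¹ ^ n * q ^ k = q ^ (k - n) := by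
    rw [sub_eq_neg_add, zpow_add₀ hq, zpow_neg, inv_zpow, zpow_natCast]
  have hpred : q ^ k * (1 - q⁻¹ ^ a) = q ^ k - q ^ (k - a) := by rw [← hinv]; ring
  have hsub : (k : ℤ) - (a - 1) = k - a + 1 := by ring
  have h₀ := exchNorm_mul_one_sub hq k a
  have h₁ := exchNorm_mul_one_sub hq k (a + 1)
  rw [hinv, hsub] at h₀
  rw [hinv, add_sub_cancel_right] at h₁
  fin_cases β <;> fin_cases γ <;>
    simp only [rowWeight, Matrix.smul_apply, Matrix.of_apply, Matrix.cons_val',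
      Matrix.cons_val_zero, Matrix.cons_val_one, Matrix.cons_val_fin_one, Fin.zero_eta, Fin.mk_one,
      Nat.cast_zero, Nat.cast_one, add_zero, sub_zero, add_sub_cancel_right,
      smul_eq_mul]
  · linear_combination (1 - q ^ k * u)⁻¹ * u * (q ^ k * h₀ - exchNorm q k a * hpred)
  · linear_combination (1 - q ^ k * u)⁻¹ * h₁

/-- The closed form of the transition coefficients of `J` rows with spectral parameters
`q w, …, q ^ J w`, with `b` incoming ones on the auxiliary sites, and `c` and `d` outgoing ones on
the row and on the auxiliary sites. -/
noncomputable def fusedCoeff (q w : ℂ) (I J : ℕ) (b : ℤ) (c d : ℕ) : ℂ :=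
  ∑ p ∈ Finset.range (c + 1),
    w ^ p * pochRatio q⁻¹ (q ^ I * w) (c - p : ℕ) * pochRatio q⁻¹ w⁻¹ p *
      (q ^ (I * d) * w ^ (d - b) *
        (pochRatio q⁻¹ (q ^ J * w) (b - p) / pochRatio q⁻¹ (q ^ (I + J) * w) (c + d - p : ℕ)))

theorem pochRatio_div_recurrence {s u y X : ℂ} {n : ℤ} {N : ℕ} (hs : 0 < n → s ^ n ≠ 1)
    (hu : u ≠ 1) (hy : y ≠ 1) (hN : s ^ N * y ≠ 1) (hX : X * s ^ n * u = s ^ N * y) :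
    (1 - X * u) * (pochRatio s (s * u) n / pochRatio s (s * y) N) -
        u * (1 - X) * (pochRatio s (s * u) (n - 1) / pochRatio s (s * y) N) =
      (1 - y) * (pochRatio s u n / pochRatio s y N) := by
  have hu' : 1 - u ≠ 0 := sub_ne_zero.2 hu.symm
  have hy' : 1 - y ≠ 0 := sub_ne_zero.2 hy.symm
  have hN' : 1 - s ^ N * y ≠ 0 := sub_ne_zero.2 hN.symm
  have hnum : (1 - X * u) * pochRatio s (s * u) n - u * (1 - X) * pochRatio s (s * u) (n - 1) =
      pochRatio s u n * (1 - s ^ N * y) := by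
    refine mul_right_cancel₀ hu' ?_
    linear_combination (1 - X * u) * pochRatio_mul_left s u n -
      u * (1 - X) * pochRatio_mul_left_sub_one u hs - pochRatio s u n * (1 - u) * hX
  have hden : pochRatio s (s * y) N = pochRatio s y N * (1 - s ^ N * y) / (1 - y) := by
    rw [eq_div_iff hy']
    exact_mod_cast pochRatio_mul_left s y N
  rw [← mul_div_assoc, ← mul_div_assoc, ← sub_div, hnum, hden, div_div_eq_mul_div,
    mul_right_comm, mul_div_mul_right _ _ hN', mul_comm, mul_div_assoc]

theorem pochRatio_div_recurrence' {s u y X F : ℂ} {n : ℤ} {N : ℕ} (hs : 0 < n → s ^ n ≠ 1)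
    (hu : u ≠ 1) (hy : y ≠ 1) (hX : X * s ^ n = F * s ^ (N + 1)) :
    (X - F) * (pochRatio s (s * u) n / pochRatio s (s * y) N) -
        (X - F * u) * (pochRatio s (s * u) (n - 1) / pochRatio s (s * y) N) =
      -F * (1 - y) * (pochRatio s u n / pochRatio s y (N + 1 : ℕ)) := by
  have hu' : 1 - u ≠ 0 := sub_ne_zero.2 hu.symm
  have hnum : (X - F) * pochRatio s (s * u) n - (X - F * u) * pochRatio s (s * u) (n - 1) =
      -F * pochRatio s u n * (1 - s ^ (N + 1)) := by
    refine mul_right_cancel₀ hu' ?_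
    linear_combination (X - F) * pochRatio_mul_left s u n -
      (X - F * u) * pochRatio_mul_left_sub_one u hs + pochRatio s u n * (1 - u) * hX
  rw [← mul_div_assoc, ← mul_div_assoc, ← sub_div, hnum]
  linear_combination F * pochRatio s u n * inv_pochRatio_succ s hy N

theorem fusedCoeff_succ_out_zero (hq : q ≠ 0) (hw : w ≠ 0)
    (hqI : ∀ n : ℕ, 0 < n → n ≤ I → q ^ n ≠ 1)
    (hqw : ∀ n : ℕ, 0 < n → n ≤ I + (J + 1) → q ^ n * w ≠ 1) {b : ℤ} (hb : b ≤ I) {c d : ℕ}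
    (hc : c ≤ I) (hd : d ≤ J) :
    (1 - q ^ (I - (c + d - b) : ℤ) * (q ^ (J + 1) * w)) * fusedCoeff q w I J b c d -
        q ^ (J + 1) * (1 - q ^ (I - (c + d - b) : ℤ)) * fusedCoeff q w I J (b - 1) c d =
      (1 - q ^ I * (q ^ (J + 1) * w)) * fusedCoeff q w I (J + 1) b c d := by
  simp only [fusedCoeff, Finset.mul_sum, ← Finset.sum_sub_distrib]
  refine Finset.sum_congr rfl fun p hp => ?_
  have hpc : p ≤ c := Finset.mem_range_succ_iff.1 hp
  have hN : q⁻¹ ^ (c + d - p) * (q ^ (I + (J + 1)) * w) ≠ 1 := by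
    rw [← mul_assoc, inv_pow_mul_pow hq (by omega)]
    exact hqw _ (by omega) (by omega)
  have hX : q ^ (I - (c + d - b) : ℤ) * q⁻¹ ^ (b - p) * (q ^ (J + 1) * w) =
      q⁻¹ ^ (c + d - p) * (q ^ (I + (J + 1)) * w) := by
    rw [← zpow_natCast q⁻¹, Nat.cast_sub (by omega), pow_add q I, inv_zpow', inv_zpow',
      mul_assoc (q ^ I), ← mul_assoc _ (q ^ I), ← zpow_natCast q I, ← zpow_add₀ hq,
      ← zpow_add₀ hq]
    congr 2
    push_cast
    ring
  have h := pochRatio_div_recurrence (inv_zpow_ne_one hqI (by omega))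
    (hqw (J + 1) J.succ_pos (by omega)) (hqw (I + (J + 1)) (by omega) le_rfl) hN hX
  rw [inv_mul_pow_succ_mul hq, ← add_assoc, inv_mul_pow_succ_mul hq] at h
  rw [sub_right_comm b 1, show (d : ℤ) - (b - 1) = d - b + 1 by ring, zpow_add_one₀ hw, ← add_assoc]
  linear_combination w ^ p * pochRatio q⁻¹ (q ^ I * w) (c - p : ℕ) * pochRatio q⁻¹ w⁻¹ p *
    (q ^ (I * d) * w ^ (d - b)) * h

theorem fusedCoeff_succ_out_one (hq : q ≠ 0) (hw : w ≠ 0)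
    (hqI : ∀ n : ℕ, 0 < n → n ≤ I → q ^ n ≠ 1) (hJ : q ^ (J + 1) * w ≠ 1)
    (hIJ : q ^ (I + (J + 1)) * w ≠ 1) {b : ℤ} (hb : b ≤ I) (c d : ℕ) :
    q ^ (J + 1) * w * (q ^ (I - (c + d + 1 - b) : ℤ) - q ^ I) * fusedCoeff q w I J b c d -
        q ^ (J + 1) * (q ^ (I - (c + d + 1 - b) : ℤ) - q ^ I * (q ^ (J + 1) * w)) *
          fusedCoeff q w I J (b - 1) c d =
      (1 - q ^ I * (q ^ (J + 1) * w)) *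
        (-q ^ (J + 1) * fusedCoeff q w I (J + 1) b c (d + 1)) := by
  simp only [fusedCoeff, Finset.mul_sum, ← Finset.sum_sub_distrib]
  refine Finset.sum_congr rfl fun p hp => ?_
  have hpc : p ≤ c := Finset.mem_range_succ_iff.1 hp
  have hX : q ^ (I - (c + d + 1 - b) : ℤ) * q⁻¹ ^ (b - p) = q ^ I * q⁻¹ ^ (c + d - p + 1) := by
    rw [← zpow_natCast q⁻¹, Nat.cast_succ, Nat.cast_sub (by omega), inv_zpow', inv_zpow',
      ← zpow_natCast q I, ← zpow_add₀ hq, ← zpow_add₀ hq]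
    congr 1
    push_cast
    ring
  have h := pochRatio_div_recurrence' (inv_zpow_ne_one hqI (by omega)) hJ hIJ hX
  rw [inv_mul_pow_succ_mul hq, ← add_assoc, inv_mul_pow_succ_mul hq] at h
  rw [sub_right_comm b 1, show (d : ℤ) - (b - 1) = d - b + 1 by ring,
    show ((d + 1 : ℕ) : ℤ) - b = d - b + 1 by push_cast; ring, zpow_add_one₀ hw, ← add_assoc,
    show c + (d + 1) - p = c + d - p + 1 by omega, mul_add_one, pow_add q (I * d)]
  linear_combination w ^ p * pochRatio q⁻¹ (q ^ I * w) (c - p : ℕ) * pochRatio q⁻¹ w⁻¹ p *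
    (q ^ (I * d) * w ^ (d - b)) * (q ^ (J + 1) * w) * h

theorem sum_rowWeight_mul_fusedCoeff (hq : q ≠ 0) (hw : w ≠ 0)
    (hqI : ∀ n : ℕ, 0 < n → n ≤ I → q ^ n ≠ 1)
    (hqw : ∀ n : ℕ, 0 < n → n ≤ I + (J + 1) → q ^ n * w ≠ 1) {a b : ℤ} (hb : b ≤ I) {c d : ℕ}
    (hc : c ≤ I) (hd : d ≤ J) (X : Fin 2) (hab : a + b = c + d + (X : ℕ)) :
    ∑ β : Fin 2, (-q ^ (J + 1)) ^ (β : ℕ) *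
        (rowWeight q (q ^ (J + 1) * w) I a β X * exchNorm q I (a + (β : ℕ) - (X : ℕ))) *
          fusedCoeff q w I J (b - (β : ℕ)) c d =
      (-q ^ (J + 1)) ^ (X : ℕ) * fusedCoeff q w I (J + 1) b c (d + (X : ℕ)) * exchNorm q I a := by
  have hIJ : q ^ (I + (J + 1)) * w ≠ 1 := hqw _ (by omega) le_rfl
  have hden : 1 - q ^ I * (q ^ (J + 1) * w) ≠ 0 := by
    rw [← mul_assoc, ← pow_add]
    exact sub_ne_zero.2 hIJ.symm
  obtain rfl : a = c + d + (X : ℕ) - b := by omega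
  simp only [rowWeight_mul_exchNorm hq, Fin.sum_univ_two]
  obtain rfl | rfl := Fin.exists_fin_two.1 ⟨X, rfl⟩
  · have h := (eq_inv_mul_iff_mul_eq₀ hden).2
      (fusedCoeff_succ_out_zero hq hw hqI hqw hb hc hd).symm
    simp only [Fin.val_zero, Fin.val_one, Nat.cast_zero, Nat.cast_one, pow_zero, pow_one,
      add_zero, sub_zero, one_mul, Matrix.smul_apply, Matrix.of_apply, Matrix.cons_val',
      Matrix.cons_val_zero, Matrix.cons_val_one, Matrix.cons_val_fin_one, smul_eq_mul]
    linear_combination -exchNorm q I (c + d - b) * h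
  · have h := (eq_inv_mul_iff_mul_eq₀ hden).2
      (fusedCoeff_succ_out_one hq hw hqI (hqw _ J.succ_pos (by omega)) hIJ hb c d).symm
    simp only [Fin.val_zero, Fin.val_one, Nat.cast_zero, Nat.cast_one, pow_zero, pow_one,
      sub_zero, one_mul, Matrix.smul_apply, Matrix.of_apply, Matrix.cons_val',
      Matrix.cons_val_zero, Matrix.cons_val_one, Matrix.cons_val_fin_one, smul_eq_mul]
    linear_combination -exchNorm q I (c + d + 1 - b) * h

end FusedCoeff

section Rows

variable {n J I : ℕ} {q w : ℂ}

/-- The ordered product of `J` rows with common row sites `s` and auxiliary sites `t`: the row with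
auxiliary site `t i` has spectral parameter `q⁻ⁱ u`, and the row at `t 0` acts first. -/
noncomputable def rowsMat (q u : ℂ) (s : Fin I → Fin n) (t : Fin J → Fin n) :
    Matrix (Fin n → Fin 2) (Fin n → Fin 2) ℂ :=
  ((List.finRange J).map fun i => rowMat q (q⁻¹ ^ (i.rev : ℕ) * u) s (t i.rev)).prod

theorem rowsMat_succ (q u : ℂ) (s : Fin I → Fin n) (t : Fin (J + 1) → Fin n) :
    rowsMat q u s t = rowsMat q (q⁻¹ * u) s (t ∘ Fin.succ) * rowMat q u s (t 0) := by
  simp only [rowsMat, List.finRange_succ_last, List.map_append, List.map_map, List.prod_append,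
    List.map_cons, List.map_nil, List.prod_singleton, Fin.rev_last, Fin.val_zero, pow_zero,
    one_mul]
  congr 3
  funext i
  simp only [Function.comp_apply, Fin.rev_castSucc, Fin.val_succ, pow_succ, mul_assoc]

theorem preservesOutside_rowsMat (q u : ℂ) (s : Fin I → Fin n) (t : Fin J → Fin n) :
    PreservesOutside (Set.range s ∪ Set.range t) (rowsMat q u s t) := by
  refine PreservesOutside.list_prod fun M hM => ?_
  obtain ⟨i, -, rfl⟩ := List.mem_map.1 hM
  exact (preservesOutside_rowMat _ _ _ _).mono <|
    Set.insert_subset (Or.inr ⟨_, rfl⟩) Set.subset_union_left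

theorem rowMat_mulVec_exchVec_mul (hq : q ≠ 0) {u : ℂ} {s : Fin I → Fin n}
    (hs : Function.Injective s) {t : Fin (J + 1) → Fin n} (ht : Function.Injective t)
    (hst : ∀ i j, s i ≠ t j) (hu : ∀ i ≤ I, 1 - q ^ i * u ≠ 0) (a b : ℤ) (x : Fin n → Fin 2) :
    (rowMat q u s (t 0) *ᵥ fun y => exchVec q a (y ∘ s) * exchVec q b (y ∘ t)) x =
      ∑ β : Fin 2, (-q ^ (J + 1)) ^ (β : ℕ) * rowWeight q u I a β (x (t 0)) *
        (exchVec q (a + (β : ℕ) - (x (t 0) : ℕ)) (x ∘ s) *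
          exchVec q (b - (β : ℕ)) (x ∘ t ∘ Fin.succ)) := by
  have h0 : t 0 ∉ Set.range s := fun ⟨i, hi⟩ => hst i 0 hi
  have hsucc (i : Fin J) : t i.succ ∈ (insert (t 0) (Set.range s))ᶜ := by
    rintro (h | ⟨j, hj⟩)
    exacts [(Fin.succ_ne_zero i) (ht h), hst _ _ hj]
  calc _ = (rowMat q u s (t 0) *ᵥ fun y => (-q ^ (J + 1)) ^ (y (t 0) : ℕ) *
          exchVec q (b - (y (t 0) : ℕ)) (x ∘ t ∘ Fin.succ) * exchVec q a (y ∘ s)) x := by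
        refine (preservesOutside_rowMat _ _ _ _).mulVec_congr fun y hy => ?_
        have htail : Fin.tail (y ∘ t) = x ∘ t ∘ Fin.succ := funext fun i => (hy (hsucc i)).symm
        rw [exchVec_tail q b, htail, mul_comm]
        rfl
    _ = _ := by
        rw [rowMat_mulVec hq hs h0 hu a
          fun β => (-q ^ (J + 1)) ^ (β : ℕ) * exchVec q (b - (β : ℕ)) (x ∘ t ∘ Fin.succ)]
        refine Finset.sum_congr rfl fun β _ => ?_
        ring

theorem rowsMat_succ_mulVec (hq : q ≠ 0) {u : ℂ} {s : Fin I → Fin n}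
    (hs : Function.Injective s) {t : Fin (J + 1) → Fin n} (ht : Function.Injective t)
    (hst : ∀ i j, s i ≠ t j) (hu : ∀ i ≤ I, 1 - q ^ i * u ≠ 0) (a b : ℤ) (x : Fin n → Fin 2) :
    (rowsMat q u s t *ᵥ fun y => exchVec q a (y ∘ s) * exchVec q b (y ∘ t)) x =
      ∑ β : Fin 2, (-q ^ (J + 1)) ^ (β : ℕ) * rowWeight q u I a β (x (t 0)) *
        (rowsMat q (q⁻¹ * u) s (t ∘ Fin.succ) *ᵥ fun y =>
          exchVec q (a + (β : ℕ) - (x (t 0) : ℕ)) (y ∘ s) *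
            exchVec q (b - (β : ℕ)) (y ∘ t ∘ Fin.succ)) x := by
  have h0 : t 0 ∈ (Set.range s ∪ Set.range (t ∘ Fin.succ))ᶜ := by
    rintro (⟨i, hi⟩ | ⟨i, hi⟩)
    exacts [hst _ _ hi, Fin.succ_ne_zero i (ht hi)]
  calc _ = (rowsMat q (q⁻¹ * u) s (t ∘ Fin.succ) *ᵥ fun y => ∑ β : Fin 2,
          (-q ^ (J + 1)) ^ (β : ℕ) * rowWeight q u I a β (x (t 0)) *
            (exchVec q (a + (β : ℕ) - (x (t 0) : ℕ)) (y ∘ s) *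
              exchVec q (b - (β : ℕ)) (y ∘ t ∘ Fin.succ))) x := by
        rw [rowsMat_succ, ← Matrix.mulVec_mulVec]
        refine (preservesOutside_rowsMat _ _ _ _).mulVec_congr fun y hy => ?_
        rw [rowMat_mulVec_exchVec_mul hq hs ht hst hu, hy h0]
    _ = _ := mulVec_sum_mul _ _ _ x

theorem fusedCoeff_no_rows (hq : q ≠ 0) (hw : w ≠ 0)
    (hqI : ∀ n : ℕ, 0 < n → n ≤ I → q ^ n ≠ 1)
    (hqw : ∀ n : ℕ, 0 < n → n ≤ I → q ^ n * w ≠ 1) {b c : ℕ} (hbc : b ≤ c) (hc : c ≤ I) :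
    fusedCoeff q w I 0 b c 0 = if b = 0 then 1 else 0 := by
  have hne (p : ℕ) : pochRatio q⁻¹ (q ^ I * w) (c - p : ℕ) ≠ 0 := by
    refine pochRatio_ne_zero (fun k h0 hk => inv_pow_ne_one hqI h0 (by omega)) fun k hk => ?_
    rw [← mul_assoc, inv_pow_mul_pow hq (by omega)]
    exact hqw _ (by omega) (by omega)
  calc fusedCoeff q w I 0 b c 0
      = w ^ (-b : ℤ) *
          ∑ p ∈ Finset.range (c + 1), w ^ p * pochRatio q⁻¹ w⁻¹ p * pochRatio q⁻¹ w (b - p) := by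
        rw [fusedCoeff, Finset.mul_sum]
        refine Finset.sum_congr rfl fun p _ => ?_
        rw [mul_zero, pow_zero, one_mul, one_mul, add_zero, add_zero, Nat.cast_zero,
          zero_sub, mul_right_comm (w ^ p), mul_mul_mul_comm, mul_div_cancel₀ _ (hne p)]
        ring
    _ = _ := by
        rw [sum_pochRatio_inv_mul_pochRatio hw hbc fun n h0 hn =>
          inv_pow_ne_one hqI h0 (hn.trans (hbc.trans hc))]
        split_ifs with hb
        · rw [hb, Nat.cast_zero, neg_zero, zpow_zero, one_mul]
        · rw [mul_zero]

theorem exchNorm_mul_fusedCoeff_no_rows (hq : q ≠ 0) (hw : w ≠ 0)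
    (hqI : ∀ n : ℕ, 0 < n → n ≤ I → q ^ n ≠ 1) (hqw : ∀ n : ℕ, 0 < n → n ≤ I → q ^ n * w ≠ 1)
    {c : ℕ} (hc : c ≤ I) (b : ℤ) :
    exchNorm q I (c - b) * fusedCoeff q w I 0 b c 0 = if b = 0 then exchNorm q I c else 0 := by
  obtain hb | hb := lt_or_ge b 0
  · have hG : fusedCoeff q w I 0 b c 0 = 0 := Finset.sum_eq_zero fun p _ => by
      rw [pochRatio_of_neg _ _ (show b - p < 0 by omega), zero_div, mul_zero, mul_zero]
    rw [hG, mul_zero, if_neg hb.ne]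
  lift b to ℕ using hb
  obtain hbc | hbc := le_or_gt b c
  · rw [fusedCoeff_no_rows hq hw hqI hqw hbc hc, mul_ite, mul_one, mul_zero]
    simp only [Nat.cast_eq_zero]
    split_ifs with hb
    · rw [hb, Nat.cast_zero, sub_zero]
    · rfl
  · rw [exchNorm_of_neg q I (by omega), zero_mul, if_neg (by omega)]

theorem exchVec_mul_exchVec_no_rows (hq : q ≠ 0) (hw : w ≠ 0)
    (hqI : ∀ n : ℕ, 0 < n → n ≤ I → q ^ n ≠ 1) (hqw : ∀ n : ℕ, 0 < n → n ≤ I → q ^ n * w ≠ 1)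
    (a b : ℤ) (x : Fin I → Fin 2) (y : Fin 0 → Fin 2) :
    exchVec q a x * exchVec q b y =
      if a + b = onesCount x + onesCount y then
        exchNorm q I a / exchNorm q I (onesCount x) *
          fusedCoeff q w I 0 b (onesCount x) (onesCount y) * (wordWeight q x * wordWeight q y)
      else 0 := by
  have hd : onesCount y = 0 := Nat.le_zero.1 (onesCount_le y)
  have hweight : wordWeight q y = 1 := Fin.prod_univ_zero _
  have hnorm : exchNorm q I (onesCount x) ≠ 0 :=
    exchNorm_ne_zero hq (onesCount_le x) fun n => inv_pow_ne_one hqI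
  have hG := exchNorm_mul_fusedCoeff_no_rows hq hw hqI hqw (onesCount_le x) b
  rw [hd, hweight, Nat.cast_zero, add_zero, mul_one, exchVec_fin_zero]
  split_ifs with hb hab hab
  · rw [show a = onesCount x - b by omega, div_mul_eq_mul_div, hG, if_pos hb, div_self hnorm, hb,
      sub_zero, exchVec, if_pos rfl, one_mul, mul_one]
  · rw [mul_one, exchVec, if_neg (by omega)]
  · rw [show a = onesCount x - b by omega, div_mul_eq_mul_div, hG, if_neg hb, zero_div, zero_mul,
      mul_zero]
  · rw [mul_zero]

theorem rowsMat_mulVec (hq : q ≠ 0) (hw : w ≠ 0) (hqI : ∀ n : ℕ, 0 < n → n ≤ I → q ^ n ≠ 1)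
    (hqw : ∀ n : ℕ, 0 < n → n ≤ I + J → q ^ n * w ≠ 1) {s : Fin I → Fin n}
    (hs : Function.Injective s) {t : Fin J → Fin n} (ht : Function.Injective t)
    (hst : ∀ i j, s i ≠ t j) (a : ℤ) {b : ℤ} (hb : b ≤ I) (x : Fin n → Fin 2) :
    (rowsMat q (q ^ J * w) s t *ᵥ fun y => exchVec q a (y ∘ s) * exchVec q b (y ∘ t)) x =
      if a + b = onesCount (x ∘ s) + onesCount (x ∘ t) then
        exchNorm q I a / exchNorm q I (onesCount (x ∘ s)) *
          fusedCoeff q w I J b (onesCount (x ∘ s)) (onesCount (x ∘ t)) *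
            (wordWeight q (x ∘ s) * wordWeight q (x ∘ t))
      else 0 := by
  induction J generalizing a b x with
  | zero => exact (congrFun (Matrix.one_mulVec _) x).trans <|
      exchVec_mul_exchVec_no_rows hq hw hqI hqw a b (x ∘ s) (x ∘ t)
  | succ J ih =>
    have hu (i : ℕ) (hi : i ≤ I) : 1 - q ^ i * (q ^ (J + 1) * w) ≠ 0 := by
      rw [← mul_assoc, ← pow_add]
      exact sub_ne_zero.2 (hqw _ (by omega) (by omega)).symm
    have htail : Fin.tail (x ∘ t) = x ∘ t ∘ Fin.succ := rfl
    have hd : onesCount (x ∘ t ∘ Fin.succ) ≤ J := onesCount_le _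
    rw [rowsMat_succ_mulVec hq hs ht hst hu, inv_mul_pow_succ_mul hq, onesCount_tail (x ∘ t),
      wordWeight_tail q (x ∘ t), htail, Function.comp_apply]
    set X := x (t 0)
    have ih' (β : Fin 2) := ih (fun n h0 hn => hqw n h0 (by omega))
      (ht.comp (Fin.succ_injective J)) (fun i j => hst i j.succ) (a + (β : ℕ) - (X : ℕ))
      (b := b - (β : ℕ)) (by omega) x
    have hcond (β : Fin 2) : a + (β : ℕ) - (X : ℕ) + (b - (β : ℕ)) =
        onesCount (x ∘ s) + onesCount (x ∘ t ∘ Fin.succ) ↔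
          a + b = onesCount (x ∘ s) + ((X : ℕ) + onesCount (x ∘ t ∘ Fin.succ) : ℕ) := by omega
    simp only [ih', hcond]
    split_ifs with hab
    · have h := sum_rowWeight_mul_fusedCoeff (J := J) hq hw hqI hqw hb (onesCount_le (x ∘ s)) hd X
        (a := a) (by omega)
      simp only [Fin.sum_univ_two] at h ⊢
      rw [add_comm (X : ℕ)]
      linear_combination (exchNorm q I (onesCount (x ∘ s)))⁻¹ *
        (wordWeight q (x ∘ s) * wordWeight q (x ∘ t ∘ Fin.succ)) * h
    · simp only [mul_zero, Finset.sum_const_zero]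

end Rows

section Fusion

variable {I : ℕ} {q u : ℂ}

/-- The sites of the first tensor factor `(ℂ²)^{⊗I}` inside `(ℂ²)^{⊗2I}`. -/
def leftSite (I : ℕ) (k : Fin I) : Fin (2 * I) := ⟨k, by omega⟩

/-- The sites of the second tensor factor `(ℂ²)^{⊗I}` inside `(ℂ²)^{⊗2I}`. -/
def rightSite (I : ℕ) (k : Fin I) : Fin (2 * I) := ⟨k + I, by omega⟩

theorem leftSite_injective (I : ℕ) : Function.Injective (leftSite I) :=
  fun _ _ h => Fin.ext (Fin.mk.inj h)

theorem rightSite_injective (I : ℕ) : Function.Injective (rightSite I) :=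
  fun _ _ h => Fin.ext (Nat.add_right_cancel (Fin.mk.inj h))

theorem leftSite_ne_rightSite (i j : Fin I) : leftSite I i ≠ rightSite I j := fun h => by
  have h' : (i : ℕ) = j + I := Fin.mk.inj h
  omega

theorem Rring_eq_rowsMat (hq : q ≠ 0) (u : ℂ) :
    Rring I q u = rowsMat q u (leftSite I) (rightSite I) := by
  refine congrArg List.prod (List.map_congr_left fun a _ =>
    congrArg List.prod (List.map_congr_left fun b _ => ?_))
  have hsite : (⟨2 * I - 1 - a, by omega⟩ : Fin (2 * I)) = rightSite I a.rev :=
    Fin.ext (by simp only [rightSite, Fin.val_rev]; omega)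
  have hexp : u * q ^ ((b : ℤ) + 1 - (I - a)) = q⁻¹ ^ (a.rev : ℕ) * u * q ^ (b : ℕ) := by
    rw [inv_pow, ← zpow_natCast q b, ← zpow_natCast q a.rev, ← zpow_neg, mul_comm _ u, mul_assoc,
      ← zpow_add₀ hq, Fin.val_rev]
    congr 2
    omega
  rw [hsite, hexp]
  rfl

/-- Splitting a word of length `2I` into its two halves. -/
def halvesEquiv (I : ℕ) : (Fin (2 * I) → Fin 2) ≃ (Fin I → Fin 2) × (Fin I → Fin 2) where
  toFun x := (firstHalf x, secondHalf x)
  invFun p k := if h : (k : ℕ) < I then p.1 ⟨k, h⟩ else p.2 ⟨k - I, by omega⟩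
  left_inv x := by
    funext k
    simp only [firstHalf, secondHalf]
    split_ifs with h
    · rfl
    · exact congrArg x (Fin.ext (Nat.sub_add_cancel (not_lt.1 h)))
  right_inv p := by
    refine Prod.ext (funext fun k => ?_) (funext fun k => ?_)
    · simp only [firstHalf, k.isLt, dif_pos]
    · simp only [secondHalf, Nat.le_add_left, not_lt_of_ge, dif_neg, not_false_eq_true,
        Nat.add_sub_cancel, Fin.eta]

theorem sum_firstHalf_mul_secondHalf (f g : (Fin I → Fin 2) → ℂ) :
    ∑ x, f (firstHalf x) * g (secondHalf x) = (∑ y, f y) * ∑ z, g z := by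
  rw [Finset.sum_mul_sum, ← Fintype.sum_prod_type', ← (halvesEquiv I).sum_comp]
  rfl

theorem hatPiPiMat_eq (hq : q ≠ 0) (y : Fin (2 * I) → Fin 2) (a b : Fin (I + 1)) :
    hatPiPiMat I q y (a, b) = (exchNorm q I (a : ℕ) * exchNorm q I (b : ℕ))⁻¹ *
      (exchVec q (a : ℕ) (y ∘ leftSite I) * exchVec q (b : ℕ) (y ∘ rightSite I)) := by
  have hfirst : firstHalf y = y ∘ leftSite I := rfl
  have hsecond : secondHalf y = y ∘ rightSite I := rfl
  rw [hatPiPiMat, hatPiMat_eq_exchVec_div hq, hatPiMat_eq_exchVec_div hq, div_mul_div_comm,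
    div_eq_inv_mul, hfirst, hsecond]

theorem PiMat_ne_zero_iff (m : Fin (I + 1)) (x : Fin I → Fin 2) :
    PiMat I m x ≠ 0 ↔ onesCount x = m := by
  rw [PiMat, ite_ne_right_iff, and_iff_left one_ne_zero, onesCount]

theorem Rring_mulVec_hatPiPiMat (hq : q ≠ 0) (hqI : ∀ n : ℕ, 0 < n → n ≤ I → q ^ n ≠ 1)
    (hu : u ≠ 0) (hreg : ∀ m : ℤ, -(I : ℤ) < m → m ≤ I → u * q ^ m ≠ 1) (a b : Fin (I + 1))
    (x : Fin (2 * I) → Fin 2) :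
    (Rring I q u *ᵥ fun y => hatPiPiMat I q y (a, b)) x =
      if (a : ℕ) + (b : ℕ) = onesCount (firstHalf x) + onesCount (secondHalf x) then
        (exchNorm q I (b : ℕ) * exchNorm q I (onesCount (firstHalf x)))⁻¹ *
          fusedCoeff q (u / q ^ I) I I (b : ℕ) (onesCount (firstHalf x))
            (onesCount (secondHalf x)) *
          (wordWeight q (firstHalf x) * wordWeight q (secondHalf x))
      else 0 := by
  have hqI0 : q ^ I ≠ 0 := pow_ne_zero _ hq
  have hqw (n : ℕ) (h0 : 0 < n) (hn : n ≤ I + I) : q ^ n * (u / q ^ I) ≠ 1 := by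
    rw [mul_div_left_comm, ← zpow_natCast q n, ← zpow_natCast q I, ← zpow_sub₀ hq]
    exact hreg _ (by omega) (by omega)
  have hZ : exchNorm q I (a : ℕ) ≠ 0 :=
    exchNorm_ne_zero hq (by omega) fun n => inv_pow_ne_one hqI
  have hrows := rowsMat_mulVec hq (div_ne_zero hu hqI0) hqI hqw (leftSite_injective I)
    (rightSite_injective I) leftSite_ne_rightSite (a : ℕ) (b := (b : ℕ)) (by omega) x
  rw [mul_div_cancel₀ _ hqI0, ← Rring_eq_rowsMat hq] at hrows
  calc (Rring I q u *ᵥ fun y => hatPiPiMat I q y (a, b)) x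
      = (exchNorm q I (a : ℕ) * exchNorm q I (b : ℕ))⁻¹ * (Rring I q u *ᵥ fun y =>
          exchVec q (a : ℕ) (y ∘ leftSite I) * exchVec q (b : ℕ) (y ∘ rightSite I)) x := by
        simp only [hatPiPiMat_eq hq]
        exact congrFun (Matrix.mulVec_smul _ (exchNorm q I (a : ℕ) * exchNorm q I (b : ℕ))⁻¹
          fun y => exchVec q (a : ℕ) (y ∘ leftSite I) * exchVec q (b : ℕ) (y ∘ rightSite I)) x
    _ = _ := by
        have hleft : x ∘ leftSite I = firstHalf x := rfl
        have hright : x ∘ rightSite I = secondHalf x := rfl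
        rw [hrows, hleft, hright, mul_ite, mul_zero]
        norm_cast
        congr 1
        field_simp

theorem RI_eq_fusedCoeff (hq : q ≠ 0) (hqI : ∀ n : ℕ, 0 < n → n ≤ I → q ^ n ≠ 1) (hu : u ≠ 0)
    (hreg : ∀ m : ℤ, -(I : ℤ) < m → m ≤ I → u * q ^ m ≠ 1) (a b c d : Fin (I + 1)) :
    RI I q u (c, d) (a, b) =
      if (a : ℕ) + (b : ℕ) = (c : ℕ) + (d : ℕ) then
        fusedCoeff q (u / q ^ I) I I (b : ℕ) c d * (exchNorm q I (d : ℕ) / exchNorm q I (b : ℕ))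
      else 0 := by
  have hZ (m : Fin (I + 1)) : exchNorm q I (m : ℕ) ≠ 0 :=
    exchNorm_ne_zero hq (by omega) fun n => inv_pow_ne_one hqI
  have hterm (x : Fin (2 * I) → Fin 2) :
      PiPiMat I (c, d) x * (Rring I q u *ᵥ fun y => hatPiPiMat I q y (a, b)) x =
        (if (a : ℕ) + (b : ℕ) = (c : ℕ) + (d : ℕ) then
          (exchNorm q I (b : ℕ) * exchNorm q I (c : ℕ))⁻¹ * fusedCoeff q (u / q ^ I) I I (b : ℕ) c d
        else 0) * ((PiMat I c (firstHalf x) * wordWeight q (firstHalf x)) *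
          (PiMat I d (secondHalf x) * wordWeight q (secondHalf x))) := by
    by_cases hcd : PiPiMat I (c, d) x = 0
    · rw [mul_mul_mul_comm, show PiMat I c _ * PiMat I d _ = 0 from hcd, hcd, zero_mul, zero_mul,
        mul_zero]
    · obtain ⟨hc, hd⟩ := mul_ne_zero_iff.1 hcd
      rw [Rring_mulVec_hatPiPiMat hq hqI hu hreg, (PiMat_ne_zero_iff _ _).1 hc,
        (PiMat_ne_zero_iff _ _).1 hd, PiPiMat]
      split_ifs
      · ring
      · rw [mul_zero, zero_mul]
  calc RI I q u (c, d) (a, b)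
      = ∑ x, PiPiMat I (c, d) x * (Rring I q u *ᵥ fun y => hatPiPiMat I q y (a, b)) x := by
        rw [RI, Matrix.mul_assoc]
        rfl
    _ = _ := by
        simp only [hterm]
        rw [← Finset.mul_sum, sum_firstHalf_mul_secondHalf (fun y => PiMat I c y * wordWeight q y)
          fun z => PiMat I d z * wordWeight q z, sum_PiMat_mul_wordWeight,
          sum_PiMat_mul_wordWeight, ite_mul, zero_mul]
        congr 1
        field_simp [hZ]

theorem zpow_mul_zpow_eq_div_pow (hq : q ≠ 0) (hu : u ≠ 0) {a b c d p : ℕ} (hab : a + b = c + d)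
    (hpc : p ≤ c) :
    u ^ ((d : ℤ) - b) * q ^ (((d : ℤ) - a) * I) * ((q ^ I) ^ (c - p) * u ^ p) =
      (u / q ^ I) ^ p * (q ^ (I * d) * (u / q ^ I) ^ ((d : ℤ) - b)) := by
  have hexp : ((d : ℤ) - a) * I + ((c - p : ℕ) * I : ℤ) + I * p + I * (d - b) = I * d := by
    have hab' : (a : ℤ) + b = c + d := by exact_mod_cast hab
    rw [Nat.cast_sub hpc]
    linear_combination -(I : ℤ) * hab'
  have hpow : q ^ (((d : ℤ) - a) * I) * (q ^ I) ^ (c - p) * (q ^ I) ^ p *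
      (q ^ I) ^ ((d : ℤ) - b) = q ^ (I * d) := by
    simp only [← zpow_natCast, ← zpow_mul, ← zpow_add₀ hq, Nat.cast_mul]
    rw [← hexp, mul_comm (I : ℤ) (c - p : ℕ)]
  have hqI0 : q ^ I ≠ 0 := pow_ne_zero _ hq
  have hqI0' : (q ^ I) ^ ((d : ℤ) - b) ≠ 0 := zpow_ne_zero _ hqI0
  rw [div_pow, div_zpow, ← hpow]
  field_simp

theorem Phi_mul_Phi_eq (hq : q ≠ 0) (hu : u ≠ 0) (hqI : ∀ n : ℕ, 0 < n → n ≤ I → q ^ n ≠ 1)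
    {a b c d p : ℕ} (hab : a + b = c + d) (hpb : p ≤ b) (hpc : p ≤ c) (hb : b ≤ I) (hd : d ≤ I) :
    u ^ ((d : ℤ) - b) * q ^ (((d : ℤ) - a) * I) *
        (Phi q⁻¹ (c - p) (c + d - p) u (q ^ I * u) * Phi q⁻¹ p b (q ^ I / u) (q ^ I)) =
      (u / q ^ I) ^ p * pochRatio q⁻¹ (q ^ I * (u / q ^ I)) (c - p : ℕ) *
          pochRatio q⁻¹ (u / q ^ I)⁻¹ p *
        (q ^ (I * d) * (u / q ^ I) ^ ((d : ℤ) - b) *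
          (pochRatio q⁻¹ (q ^ I * (u / q ^ I)) (b - p) /
            pochRatio q⁻¹ (q ^ (I + I) * (u / q ^ I)) (c + d - p : ℕ))) *
        (exchNorm q I d / exchNorm q I b) := by
  have hqI0 : q ^ I ≠ 0 := pow_ne_zero _ hq
  have hnorm {m : ℕ} (hm : m ≤ I) : exchNorm q I m = pochRatio q⁻¹ (q ^ I) m :=
    exchNorm_eq_pochRatio hq I m fun n h0 hn => inv_pow_ne_one hqI h0 (hn.trans hm)
  have hpow := zpow_mul_zpow_eq_div_pow (I := I) hq hu hab hpc
  rw [Phi_eq_pochRatio, Phi_eq_pochRatio, hnorm hd, hnorm hb, pow_add, mul_assoc (q ^ I),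
    mul_div_cancel₀ _ hqI0, inv_div, mul_div_cancel_right₀ _ hu, div_div_cancel₀ hqI0,
    show c + d - p - (c - p) = d by omega, ← Nat.cast_sub hpb]
  linear_combination pochRatio q⁻¹ u (c - p : ℕ) * pochRatio q⁻¹ (q ^ I) d /
    pochRatio q⁻¹ (q ^ I * u) (c + d - p : ℕ) * (pochRatio q⁻¹ (q ^ I / u) p *
      pochRatio q⁻¹ u (b - p : ℕ) / pochRatio q⁻¹ (q ^ I) b) * hpow

theorem fusedCoeff_mul_exchNorm_div (hq : q ≠ 0) (hu : u ≠ 0)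
    (hqI : ∀ n : ℕ, 0 < n → n ≤ I → q ^ n ≠ 1) {a b c d : ℕ} (hab : a + b = c + d) (hb : b ≤ I)
    (hd : d ≤ I) :
    fusedCoeff q (u / q ^ I) I I b c d * (exchNorm q I d / exchNorm q I b) =
      u ^ ((d : ℤ) - b) * q ^ (((d : ℤ) - a) * I) * ∑ p ∈ Finset.range (min b c + 1),
        Phi q⁻¹ (c - p) (c + d - p) u (q ^ I * u) * Phi q⁻¹ p b (q ^ I / u) (q ^ I) := by
  have hsub : Finset.range (min b c + 1) ⊆ Finset.range (c + 1) :=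
    Finset.range_mono (by omega)
  rw [fusedCoeff, Finset.sum_mul, Finset.mul_sum]
  refine (Finset.sum_subset hsub fun p hpc hp => ?_).symm.trans
    (Finset.sum_congr rfl fun p hp => ?_)
  · rw [Finset.mem_range] at hpc hp
    rw [pochRatio_of_neg _ _ (show (b : ℤ) - p < 0 by omega), zero_div, mul_zero, mul_zero,
      zero_mul]
  · rw [Finset.mem_range] at hp
    exact (Phi_mul_Phi_eq hq hu hqI hab (by omega) (by omega) hb hd).symm

end Fusion

theorem fused_R_explicit_general (I : ℕ) (q : ℂ) (hq : q ≠ 0)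
    (hqI : ∀ n : ℕ, 0 < n → n ≤ I → q ^ n ≠ 1) (u : ℂ) (hu : u ≠ 0)
    (hreg : ∀ m : ℤ, -(I : ℤ) < m → m ≤ I → u * q ^ m ≠ 1) (a b c d : Fin (I + 1)) :
    RI I q u (c, d) (a, b) =
      if (a : ℕ) + (b : ℕ) = (c : ℕ) + (d : ℕ) then
        u ^ ((d : ℤ) - (b : ℤ)) * q ^ (((d : ℤ) - (a : ℤ)) * (I : ℤ)) *
          ∑ p ∈ Finset.range (min (b : ℕ) (c : ℕ) + 1),
            Phi q⁻¹ ((c : ℕ) - p) ((c : ℕ) + (d : ℕ) - p) u (q ^ I * u) *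
              Phi q⁻¹ p (b : ℕ) (q ^ I / u) (q ^ I)
      else 0 := by
  rw [RI_eq_fusedCoeff hq hqI hu hreg]
  split_ifs with hab
  · exact fusedCoeff_mul_exchNorm_div hq hu hqI hab (by omega) (by omega)
  · rfl

/-- **Explicit formula for the fused `R`-matrix**:
`R^I(u)_{a,b}^{c,d} = 𝟙_{a+b=c+d} u^{d−b} q^{(d−a)I}
  Σ_{p=0}^{min(b,c)} Φ_{q⁻¹}(c−p, c+d−p; u, q^I u) Φ_{q⁻¹}(p, b; q^I/u, q^I)`. -/
theorem fused_R_explicit (I : ℕ) (hI : 1 ≤ I) (q : ℝ) (hq0 : 0 < q) (hq1 : q < 1)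
    (u : ℂ) (hu : u ≠ 0)
    (hreg : ∀ m : ℤ, -(I : ℤ) ≤ m → m ≤ (I : ℤ) → u * (q : ℂ) ^ m ≠ 1)
    (a b c d : Fin (I + 1)) :
    RI I (q : ℂ) u (c, d) (a, b) =
      if (a : ℕ) + (b : ℕ) = (c : ℕ) + (d : ℕ) then
        u ^ ((d : ℤ) - (b : ℤ)) * (q : ℂ) ^ (((d : ℤ) - (a : ℤ)) * (I : ℤ)) *
          ∑ p ∈ Finset.range (min (b : ℕ) (c : ℕ) + 1),
            Phi ((q : ℂ))⁻¹ ((c : ℕ) - p) ((c : ℕ) + (d : ℕ) - p) u ((q : ℂ) ^ (I : ℕ) * u) *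
              Phi ((q : ℂ))⁻¹ p (b : ℕ) ((q : ℂ) ^ (I : ℕ) / u) ((q : ℂ) ^ (I : ℕ))
      else 0 := by
  exact fused_R_explicit_general I q (by exact_mod_cast hq0.ne')
    (fun n h0 _ => by exact_mod_cast (pow_lt_one₀ hq0.le hq1 h0.ne').ne) u hu
    (fun m hm => hreg m hm.le) a b c d
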